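/- arXiv:1211.0738 — 2 statements merged into one kernel-verified Lean document; each statement's English description precedes it below -/
import Mathlib

section
/- Let Q = (x^{α''}, y^{β''}, z^{γ''})R where α'' = min(α, α'), β'' = min(β, β'), γ'' = min(γ, γ'). Then for every n ≥ 2, (Iⁿ :_R Q)/Iⁿ ≅ (R/Q)^{⊕ C(n,2)}, where C(n,2) = n(n−1)/2. -/
open IsLocalRing

/-
Let `f`, `g` be the linear forms in `S = R[X₀, X₁, X₂]` with the two rows of the matrix as
coefficients. The Rees algebra of `I` is `S/(f, g)`, and since all entries of the matrix lie
in `Q = (q)` one can write `f = q ⬝ f'`, `g = q ⬝ g'` with vectors of linear forms `f'`, `g'`.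
The quotient `(Iⁿ : Q)/Iⁿ` is the degree `n` part of the first Koszul cohomology `H¹(q; S/(f, g))`.
Since `q` is regular on `S` and `(f, g) ⊆ QS`, this `H¹` is `S/QS`, generated by the class of
`f' × g'` in degree 2, so its degree `n` part is free over `R/Q` on the monomials of degree `n - 2`.
-/

open RingTheory.Sequence
open scoped Matrix

/-- `r` is a nonzerodivisor on `A ⧸ J`, stated elementwise so that `J` can be rewritten freely. -/
def IsRegularMod {A : Type*} [CommRing A] (J : Ideal A) (r : A) : Prop :=
  ∀ w, r * w ∈ J → w ∈ J

section Regularity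

variable {A : Type*} [CommRing A] {J : Ideal A} {r s : A}

lemma isRegularMod_iff_mk_mem_nonZeroDivisors :
    IsRegularMod J r ↔ Ideal.Quotient.mk J r ∈ nonZeroDivisors (A ⧸ J) := by
  simp [IsRegularMod, mem_nonZeroDivisors_iff_left, Ideal.Quotient.mk_surjective.forall,
    ← map_mul, Ideal.Quotient.eq_zero_iff_mem]

lemma IsRegularMod.pow (hr : IsRegularMod J r) (n : ℕ) : IsRegularMod J (r ^ n) := by
  rw [isRegularMod_iff_mk_mem_nonZeroDivisors] at hr ⊢
  rw [map_pow]
  exact pow_mem hr n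

lemma isWeaklyRegular_triple_iff {u v w : A} :
    IsWeaklyRegular A [u, v, w] ↔ IsRegularMod ⊥ u ∧ IsRegularMod (Ideal.span {u}) v ∧
      IsRegularMod (Ideal.span {u, v}) w := by
  simp [isWeaklyRegular_iff_Fin, Fin.forall_fin_succ, isSMulRegular_quotient_iff_mem_of_smul_mem,
    IsRegularMod, Ideal.span_insert]

lemma IsRegularMod.swap (hr : IsRegularMod J r) (hs : IsRegularMod (J ⊔ Ideal.span {r}) s) :
    IsRegularMod (J ⊔ Ideal.span {s}) r := by
  simp only [IsRegularMod, sup_comm J, Ideal.mem_span_singleton_sup] at hr hs ⊢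
  rintro w ⟨t, j, hj, hw⟩
  obtain ⟨v, i, hi, rfl⟩ := hs t ⟨w, -j, J.neg_mem hj, by linear_combination -hw⟩
  refine ⟨v, w - v * s, hr _ ?_, by ring⟩
  rw [show r * (w - v * s) = j + s * i by linear_combination -hw]
  exact J.add_mem hj (J.mul_mem_left s hi)

open Polynomial in
lemma IsRegularMod.of_coeff {f : A[X]} {n : ℕ} (h : IsRegularMod J (f.coeff n))
    (hf : f.natDegree ≤ n) : IsRegularMod (J.map C) f := by
  rw [isRegularMod_iff_mk_mem_nonZeroDivisors] at h
  intro w hw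
  rw [← J.mk_ker, ← ker_mapRingHom, RingHom.mem_ker, coe_mapRingHom] at hw ⊢
  nontriviality A ⧸ J
  have hlead : (f.map (Ideal.Quotient.mk J)).leadingCoeff = Ideal.Quotient.mk J (f.coeff n) := by
    rw [leadingCoeff, natDegree_eq_of_le_of_coeff_ne_zero (natDegree_map_le.trans hf)
      (by rw [coeff_map]; exact nonZeroDivisors.ne_zero h), coeff_map]
  rw [Polynomial.map_mul] at hw
  exact (mem_nonZeroDivisors_iff_left.1
    (mem_nonZeroDivisors_of_leadingCoeff (hlead.symm ▸ h))) _ hw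

end Regularity

section Resultant

open Polynomial

variable {P : Type*} [CommRing P] {J : Ideal P} {p f₀ s g₀ : P}

lemma IsRegularMod.polynomialC (hp : IsRegularMod J p) : IsRegularMod (J.map C) (C p) :=
  .of_coeff (n := 0) (by rwa [coeff_C_zero]) (natDegree_C p).le

lemma IsRegularMod.linear (hp : IsRegularMod J p) (f₀ : P) :
    IsRegularMod (J.map C) (C p * X + C f₀) :=
  .of_coeff (n := 1) (by simpa using hp) natDegree_linear_le

/- Modulo `f = pX + f₀` the resultant is `-p` times `g = sX + g₀`, so `g` is a nonzerodivisor
as soon as the resultant is one. -/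
lemma IsRegularMod.linear_sup_span_linear (hp : IsRegularMod J p)
    (hres : IsRegularMod J (s * f₀ - p * g₀))
    (hpres : IsRegularMod (J ⊔ Ideal.span {p}) (s * f₀ - p * g₀)) :
    IsRegularMod (J.map C ⊔ Ideal.span {C p * X + C f₀}) (C s * X + C g₀) := by
  have hresC : IsRegularMod (J.map C ⊔ Ideal.span {C p * X + C f₀}) (C (s * f₀ - p * g₀)) := by
    refine hres.polynomialC.swap ?_
    rw [← Set.image_singleton, ← Ideal.map_span, ← Ideal.map_sup]
    exact (hp.swap hpres).linear f₀
  intro w hw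
  refine hresC w ?_
  have hdecomp : C (s * f₀ - p * g₀) * w =
      C s * w * (C p * X + C f₀) - C p * ((C s * X + C g₀) * w) := by
    simp only [map_sub, map_mul]
    ring
  rw [hdecomp]
  exact Ideal.sub_mem _ (Ideal.mul_mem_left _ _
    (Ideal.mem_sup_right (Ideal.mem_span_singleton_self _))) (Ideal.mul_mem_left _ _ hw)

lemma isWeaklyRegular_linear_linear_C {k : P} (hp : IsRegularMod ⊥ p)
    (hres : IsRegularMod ⊥ (s * f₀ - p * g₀))
    (hpres : IsRegularMod (Ideal.span {p}) (s * f₀ - p * g₀)) (hk : IsRegularMod ⊥ k)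
    (hkp : IsRegularMod (Ideal.span {k}) p)
    (hkres : IsRegularMod (Ideal.span {k}) (s * f₀ - p * g₀))
    (hkpres : IsRegularMod (Ideal.span {k, p}) (s * f₀ - p * g₀)) :
    IsWeaklyRegular P[X] [C p * X + C f₀, C s * X + C g₀, C k] := by
  have hf := hp.linear f₀
  have hkf := hkp.linear f₀
  have hkC := hk.polynomialC
  have hfg := hp.linear_sup_span_linear hres (by rwa [bot_sup_eq])
  have hkfg := hkp.linear_sup_span_linear hkres (by rwa [← Ideal.span_insert])
  simp only [Ideal.map_bot, bot_sup_eq, Ideal.map_span, Set.image_singleton] at hf hkf hkC hfg hkfg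
  have hfk := hkC.swap (by rwa [bot_sup_eq])
  rw [bot_sup_eq] at hfk
  refine isWeaklyRegular_triple_iff.2 ⟨hf, hfg, ?_⟩
  rw [Ideal.span_insert]
  exact hfk.swap (by rwa [sup_comm])

end Resultant

section LinearForm

open MvPolynomial

variable {R σ : Type*} [CommRing R] {J : Ideal R}

/-- The linear form `∑ i, uᵢ Xᵢ` with coefficient vector `u`. -/
noncomputable def linearForm [Fintype σ] (u : σ → R) : MvPolynomial σ R :=
  ∑ i, C (u i) * X i

lemma finSuccEquiv_linearForm {n : ℕ} (u : Fin (n + 1) → R) :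
    finSuccEquiv R n (linearForm u) =
      Polynomial.C (C (u 0)) * Polynomial.X + Polynomial.C (linearForm (Fin.tail u)) := by
  simp [linearForm, Fin.sum_univ_succ, finSuccEquiv_apply, Fin.tail]

lemma finSuccEquiv_mem_map_C_iff {n : ℕ} {w : MvPolynomial (Fin (n + 1)) R} :
    finSuccEquiv R n w ∈ (J.map C).map Polynomial.C ↔ w ∈ J.map C := by
  simp only [Ideal.mem_map_C_iff, mem_map_C_iff, finSuccEquiv_coeff_coeff]
  exact ⟨fun h m ↦ m.cons_tail ▸ h _ _, fun h i m ↦ h _⟩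

lemma IsRegularMod.mvPolynomialC {r : R} (hr : IsRegularMod J r) :
    IsRegularMod (J.map (C (σ := σ))) (C r) := by
  intro w hw
  simp only [mem_map_C_iff, coeff_C_mul] at hw ⊢
  exact fun m ↦ hr _ (hw m)

lemma IsRegularMod.linearForm {n : ℕ} {u : Fin (n + 1) → R} (hu : IsRegularMod J (u 0)) :
    IsRegularMod (J.map C) (linearForm u) := by
  intro w hw
  rw [← finSuccEquiv_mem_map_C_iff] at hw ⊢
  refine hu.mvPolynomialC.linear (_root_.linearForm (Fin.tail u)) _ ?_
  rwa [← finSuccEquiv_linearForm, ← map_mul]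

lemma C_mul_linearForm_tail_sub (u v : Fin 3 → R) :
    C (u 0) * linearForm (Fin.tail v) - C (v 0) * linearForm (Fin.tail u) =
      linearForm ![(u ⨯₃ v) 2, -(u ⨯₃ v) 1] := by
  simp only [linearForm, Fin.tail, Fin.sum_univ_two, Fin.succ_zero_eq_one, Fin.succ_one_eq_two,
    cross_apply, Matrix.cons_val, neg_sub, C_sub, C_mul]
  ring

lemma isWeaklyRegular_linearForm_linearForm_C {u v : Fin 3 → R} {k : R}
    (h : ∀ l : List R, l.Perm [k, v 0, (u ⨯₃ v) 2] → IsWeaklyRegular R l) :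
    IsWeaklyRegular (MvPolynomial (Fin 3) R) [linearForm v, linearForm u, C k] := by
  set p := v 0
  set c := (u ⨯₃ v) 2
  obtain ⟨hk, hkp, hkpc⟩ := isWeaklyRegular_triple_iff.1 (h [k, p, c] (.refl _))
  obtain ⟨hp, hpc, -⟩ := isWeaklyRegular_triple_iff.1
    (h [p, c, k] (List.perm_append_comm (l₁ := [p, c]) (l₂ := [k])))
  obtain ⟨-, hkc, -⟩ := isWeaklyRegular_triple_iff.1 (h [k, c, p] (.cons _ (.swap _ _ _)))
  obtain ⟨hc, -, -⟩ := isWeaklyRegular_triple_iff.1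
    (h [c, k, p] (List.perm_append_comm (l₁ := [c]) (l₂ := [k, p])))
  have hres {J : Ideal R} (hJ : IsRegularMod J c) : IsRegularMod (J.map (C (σ := Fin 2)))
      (C (u 0) * linearForm (Fin.tail v) - C p * linearForm (Fin.tail u)) := by
    rw [C_mul_linearForm_tail_sub]
    exact .linearForm hJ
  have hpC := hp.mvPolynomialC (σ := Fin 2)
  have hkC := hk.mvPolynomialC (σ := Fin 2)
  have hkpC := hkp.mvPolynomialC (σ := Fin 2)
  have hres₀ := hres hc
  have hpres := hres hpc
  have hkres := hres hkc
  have hkpres := hres hkpc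
  simp only [Ideal.map_bot, Ideal.map_span, Set.image_singleton, Set.image_pair]
    at hpC hkC hkpC hres₀ hpres hkres hkpres
  have hseq := isWeaklyRegular_linear_linear_C hpC hres₀ hpres hkC hkpC hkres hkpres
  have hequiv {F : MvPolynomial (Fin 3) R} {G} (hFG : finSuccEquiv R 2 F = G) (w) :
      (finSuccEquiv R 2).toAddEquiv (F • w) = G • (finSuccEquiv R 2).toAddEquiv w := by
    simp [← hFG]
  exact (AddEquiv.isWeaklyRegular_congr (.cons (hequiv (finSuccEquiv_linearForm v))
    (.cons (hequiv (finSuccEquiv_linearForm u))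
      (.cons (hequiv (by simp [finSuccEquiv_apply])) .nil)))).2 hseq

end LinearForm

section LinearType

open MvPolynomial

variable {R σ B : Type*} [CommRing R] [CommRing B] [Algebra R B] {n : ℕ}

lemma aeval_mul_of_isHomogeneous {F : MvPolynomial σ R} (hF : F.IsHomogeneous n) (c : B)
    (g : σ → B) : aeval (fun i ↦ c * g i) F = c ^ n * aeval g F := by
  simp only [aeval_def, eval₂_eq, Finset.mul_sum]
  refine Finset.sum_congr rfl fun d hd ↦ ?_
  have hdeg : ∑ i ∈ d.support, d i = n := by
    rw [← hF (mem_support_iff.1 hd), Finsupp.weight_apply, Finsupp.sum]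
    simp
  simp only [mul_pow, Finset.prod_mul_distrib, Finset.prod_pow_eq_pow_sum, hdeg]
  ring

lemma aeval_mul_algebraMap_of_isHomogeneous {F : MvPolynomial σ R} (hF : F.IsHomogeneous n)
    (c : B) (r : σ → R) :
    aeval (fun i ↦ c * algebraMap R B (r i)) F = c ^ n * algebraMap R B (eval r F) := by
  rw [aeval_mul_of_isHomogeneous hF, ← coe_aeval_eq_eval]
  exact congrArg _ (aeval_algebraMap_apply B r F)

lemma aeval_sub_aeval_mem {K : Ideal B} {g h : σ → B} (hgh : ∀ i, g i - h i ∈ K)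
    (F : MvPolynomial σ R) : aeval g F - aeval h F ∈ K := by
  rw [← Ideal.Quotient.eq, ← Ideal.Quotient.mkₐ_eq_mk R, ← AlgHom.comp_apply, ← AlgHom.comp_apply,
    comp_aeval, comp_aeval]
  exact congrArg (aeval · F) (funext fun i ↦ Ideal.Quotient.eq.2 (hgh i))

lemma C_pow_mul_sub_X_pow_mul_mem {r : σ → R} {j : σ} {K : Ideal (MvPolynomial σ R)}
    (hK : ∀ i, C (r j) * X i - X j * C (r i) ∈ K) {F : MvPolynomial σ R}
    (hF : F.IsHomogeneous n) : C (r j) ^ n * F - X j ^ n * C (eval r F) ∈ K := by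
  have hmem := aeval_sub_aeval_mem hK F
  rwa [aeval_mul_of_isHomogeneous hF, aeval_X_left_apply, ← algebraMap_eq,
    aeval_mul_algebraMap_of_isHomogeneous hF] at hmem

/-- The homomorphism `Xᵢ ↦ rᵢ T` onto the Rees algebra of the ideal generated by the `rᵢ`. -/
noncomputable def reesMap (r : σ → R) : MvPolynomial σ R →ₐ[R] Polynomial R :=
  aeval fun i ↦ .X * .C (r i)

lemma reesMap_of_isHomogeneous (r : σ → R) {F : MvPolynomial σ R} (hF : F.IsHomogeneous n) :
    reesMap r F = .X ^ n * .C (eval r F) := by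
  rw [reesMap, ← Polynomial.algebraMap_eq, aeval_mul_algebraMap_of_isHomogeneous hF]

lemma coeff_reesMap_mem (r : σ → R) (F : MvPolynomial σ R) (k : ℕ) :
    (reesMap r F).coeff k ∈ Ideal.span (Set.range r) ^ k := by
  refine (mem_reesAlgebra_iff _ _).1 ?_ k
  have hrange : (reesMap r).range ≤ reesAlgebra (Ideal.span (Set.range r)) := by
    rw [reesMap, ← Algebra.adjoin_range_eq_range_aeval, Algebra.adjoin_le_iff]
    rintro _ ⟨i, rfl⟩
    simpa [Polynomial.X_mul_C, Polynomial.C_mul_X_eq_monomial, reesAlgebra.monomial_mem]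
      using Ideal.subset_span (Set.mem_range_self i)
  exact hrange ⟨F, rfl⟩

lemma isHomogeneous_linearForm [Fintype σ] (u : σ → R) : (linearForm u).IsHomogeneous 1 :=
  IsHomogeneous.sum _ _ _ fun i _ ↦ isHomogeneous_C_mul_X (u i) i

lemma eval_linearForm [Fintype σ] (u r : σ → R) : eval r (linearForm u) = u ⬝ᵥ r := by
  simp [linearForm, dotProduct]

lemma reesMap_eq_zero_of_mem_span_linearForm {u v : Fin 3 → R} {F : MvPolynomial (Fin 3) R}
    (hF : F ∈ Ideal.span {linearForm v, linearForm u}) : reesMap (u ⨯₃ v) F = 0 := by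
  rw [← RingHom.mem_ker]
  refine Ideal.span_le.2 ?_ hF
  rintro _ (rfl | rfl) <;>
    simp [RingHom.mem_ker, reesMap_of_isHomogeneous _ (isHomogeneous_linearForm _),
      eval_linearForm]

/- With `T = (X₀, X₁, X₂)`, these are entries of `T × (u × v) = (T ⬝ v) u - (T ⬝ u) v`. -/
lemma koszul_mem_span_linearForm (u v : Fin 3 → R) (i : Fin 3) :
    C ((u ⨯₃ v) 0) * X i - X 0 * C ((u ⨯₃ v) i) ∈ Ideal.span {linearForm v, linearForm u} := by
  rw [Ideal.mem_span_pair]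
  fin_cases i
  · exact ⟨0, 0, by simp [mul_comm]⟩
  · refine ⟨-C (u 2), C (v 2), ?_⟩
    simp only [linearForm, Fin.sum_univ_three, cross_apply, Fin.mk_one, Matrix.cons_val, C_sub,
      C_mul]
    ring
  · refine ⟨C (u 1), -C (v 1), ?_⟩
    simp only [linearForm, Fin.sum_univ_three, cross_apply, Fin.reduceFinMk, Matrix.cons_val,
      C_sub, C_mul]
    ring

lemma mem_span_linearForm_of_eval_eq_zero {u v : Fin 3 → R}
    (hr : IsRegularMod (Ideal.span {linearForm v, linearForm u}) (C ((u ⨯₃ v) 0)))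
    {F : MvPolynomial (Fin 3) R} (hF : F.IsHomogeneous n) (hFr : eval (u ⨯₃ v) F = 0) :
    F ∈ Ideal.span {linearForm v, linearForm u} := by
  have hmem := C_pow_mul_sub_X_pow_mul_mem (fun i ↦ koszul_mem_span_linearForm u v i) hF
  rw [hFr, map_zero, mul_zero, sub_zero] at hmem
  exact hr.pow n F hmem

end LinearType

section Koszul

variable {S : Type*} [CommRing S] {q : Fin 3 → S}

lemma exists_eq_smul_of_cross_eq_zero (h : IsWeaklyRegular S [q 0, q 1, q 2]) {u : Fin 3 → S}
    (hu : q ⨯₃ u = 0) : ∃ v : S, u = v • q := by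
  obtain ⟨h₀, h₁, -⟩ := isWeaklyRegular_triple_iff.1 h
  have hu₁ : q 2 * u 0 - q 0 * u 2 = 0 := by simpa [cross_apply] using congrFun hu 1
  have hu₂ : q 0 * u 1 - q 1 * u 0 = 0 := by simpa [cross_apply] using congrFun hu 2
  obtain ⟨v, hv⟩ := Ideal.mem_span_singleton'.1
    (h₁ (u 0) (Ideal.mem_span_singleton'.2 ⟨u 1, by linear_combination hu₂⟩))
  refine ⟨v, funext fun i ↦ sub_eq_zero.1 (h₀ _ ?_)⟩
  rw [Ideal.mem_bot]
  fin_cases i <;> simp only [Pi.smul_apply, smul_eq_mul, Fin.zero_eta, Fin.mk_one, Fin.reduceFinMk]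
  · linear_combination -q 0 * hv
  · linear_combination hu₂ - q 1 * hv
  · linear_combination -hu₁ - q 2 * hv

lemma exists_eq_cross_of_dotProduct_eq_zero (h : IsWeaklyRegular S [q 0, q 1, q 2])
    {v : Fin 3 → S} (hv : q ⬝ᵥ v = 0) : ∃ m : Fin 3 → S, v = q ⨯₃ m := by
  obtain ⟨h₀, h₁, h₂⟩ := isWeaklyRegular_triple_iff.1 h
  rw [Matrix.vec3_dotProduct] at hv
  obtain ⟨m₁, m₀, hv₂⟩ := Ideal.mem_span_pair.1 (h₂ (v 2)
    (Ideal.mem_span_pair.2 ⟨-v 0, -v 1, by linear_combination -hv⟩))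
  obtain ⟨m₂, hv₁⟩ := Ideal.mem_span_singleton'.1 (h₁ (v 1 + q 2 * m₀)
    (Ideal.mem_span_singleton'.2 ⟨-(v 0 + q 2 * m₁), by linear_combination -hv - q 2 * hv₂⟩))
  have hv₀ := h₀ (v 0 + q 2 * m₁ + q 1 * m₂)
    (by rw [Ideal.mem_bot]; linear_combination hv + q 2 * hv₂ + q 1 * hv₁)
  rw [Ideal.mem_bot] at hv₀
  refine ⟨![-m₀, m₁, -m₂], funext fun i ↦ ?_⟩
  rw [cross_apply]
  fin_cases i <;> simp only [Fin.zero_eta, Fin.mk_one, Fin.reduceFinMk, Matrix.cons_val]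
  · linear_combination hv₀
  · linear_combination -hv₁
  · linear_combination -hv₂

variable {f' g' : Fin 3 → S}

lemma cross_cross_eq_dotProduct_smul_sub :
    q ⨯₃ (f' ⨯₃ g') = (q ⬝ᵥ g') • f' - (q ⬝ᵥ f') • g' := by
  rw [cross_cross_eq_smul_sub_smul', dotProduct_comm f' q]

lemma exists_sub_smul_cross_sub_smul_mem (hq : IsWeaklyRegular S [q 0, q 1, q 2])
    (hf : IsRegularMod ⊥ (q ⬝ᵥ f')) (hg : IsRegularMod (Ideal.span {q ⬝ᵥ f'}) (q ⬝ᵥ g'))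
    {u : Fin 3 → S} (hu : ∀ i, (q ⨯₃ u) i ∈ Ideal.span {q ⬝ᵥ f', q ⬝ᵥ g'}) :
    ∃ e v : S, ∀ i, (u - e • (f' ⨯₃ g') - v • q) i ∈ Ideal.span {q ⬝ᵥ f', q ⬝ᵥ g'} := by
  set f := q ⬝ᵥ f'
  set g := q ⬝ᵥ g'
  choose a b hab using fun i ↦ Ideal.mem_span_pair.1 (hu i)
  have hqu : q ⨯₃ u = f • a + g • b := by
    ext i
    simp [← hab i, mul_comm]
  have hdot : f * (q ⬝ᵥ a) + g * (q ⬝ᵥ b) = 0 := by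
    rw [← dot_self_cross q u, hqu, dotProduct_add, dotProduct_smul, dotProduct_smul, smul_eq_mul,
      smul_eq_mul]
  obtain ⟨e, he⟩ := Ideal.mem_span_singleton'.1 (hg (q ⬝ᵥ b)
    (Ideal.mem_span_singleton'.2 ⟨-(q ⬝ᵥ a), by linear_combination -hdot⟩))
  have ha : q ⬝ᵥ a + e * g = 0 := (Submodule.mem_bot S).1 (hf _ (by
    rw [Ideal.mem_bot]
    linear_combination hdot + g * he))
  obtain ⟨m, hm⟩ := exists_eq_cross_of_dotProduct_eq_zero hq (v := a + e • g')
    (by rw [dotProduct_add, dotProduct_smul, smul_eq_mul, ha])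
  obtain ⟨k, hk⟩ := exists_eq_cross_of_dotProduct_eq_zero hq (v := b - e • f')
    (by rw [dotProduct_sub, dotProduct_smul, smul_eq_mul, ← he, sub_self])
  obtain ⟨v, hv⟩ := exists_eq_smul_of_cross_eq_zero hq
    (u := u - e • (f' ⨯₃ g') - (f • m + g • k)) (by
      simp only [map_sub, map_add, map_smul, hqu, ← hm, ← hk, cross_cross_eq_dotProduct_smul_sub]
      module)
  refine ⟨e, v, fun i ↦ Ideal.mem_span_pair.2 ⟨m i, k i, ?_⟩⟩
  rw [← hv]
  simp [mul_comm]

lemma mem_span_range_of_smul_cross_sub_smul_mem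
    (hf : IsRegularMod ⊥ (q ⬝ᵥ f')) (hg : IsRegularMod (Ideal.span {q ⬝ᵥ f'}) (q ⬝ᵥ g'))
    {e v : S} (h : ∀ i, (e • (f' ⨯₃ g') - v • q) i ∈ Ideal.span {q ⬝ᵥ f', q ⬝ᵥ g'}) :
    e ∈ Ideal.span (Set.range q) := by
  set f := q ⬝ᵥ f'
  set g := q ⬝ᵥ g'
  choose a b hab using fun i ↦ Ideal.mem_span_pair.1 (h i)
  have heq : e • (f' ⨯₃ g') - v • q = f • a + g • b := by
    ext i
    simp [← hab i, mul_comm]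
  have hcross : g • (e • f' - q ⨯₃ b) = f • (q ⨯₃ a + e • g') := by
    have := congrArg (crossProduct q) heq
    simp only [map_sub, map_add, map_smul, cross_self, cross_cross_eq_dotProduct_smul_sub] at this
    rw [← sub_eq_zero] at this ⊢
    rw [← this]
    module
  choose w hw using fun i ↦ Ideal.mem_span_singleton'.1 (hg ((e • f' - q ⨯₃ b) i)
    (Ideal.mem_span_singleton'.2 ⟨(q ⨯₃ a + e • g') i, by
      rw [mul_comm]; exact (congrFun hcross i).symm⟩))
  have hew : q ⬝ᵥ (e • f' - q ⨯₃ b) = q ⬝ᵥ f • w :=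
    congrArg _ (funext fun i ↦ by simp [← hw i, mul_comm])
  simp only [dotProduct_sub, dotProduct_smul, dot_self_cross, smul_eq_mul, sub_zero] at hew
  have he : e - q ⬝ᵥ w = 0 := (Submodule.mem_bot S).1 (hf _ (by
    rw [Ideal.mem_bot]
    linear_combination hew))
  rw [sub_eq_zero.1 he]
  exact Ideal.sum_mem _ fun i _ ↦ Ideal.mul_mem_right _ _ (Ideal.subset_span ⟨i, rfl⟩)

end Koszul

section Colon

open MvPolynomial

variable {R : Type*} [CommRing R]

lemma map_cross {S T : Type*} [CommRing S] [CommRing T] (φ : S →+* T) (u v : Fin 3 → S)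
    (i : Fin 3) : φ ((u ⨯₃ v) i) = ((φ ∘ u) ⨯₃ (φ ∘ v)) i := by
  fin_cases i <;> simp [cross_apply]

lemma isHomogeneous_cross {σ : Type*} {u v : Fin 3 → MvPolynomial σ R} {m n : ℕ}
    (hu : ∀ i, (u i).IsHomogeneous m) (hv : ∀ i, (v i).IsHomogeneous n) (i : Fin 3) :
    ((u ⨯₃ v) i).IsHomogeneous (m + n) := by
  rw [cross_apply]
  fin_cases i <;> exact ((hu _).mul (hv _)).sub ((hu _).mul (hv _))

lemma linearForm_vecMul {σ ι : Type*} [Fintype σ] [Fintype ι] (q : ι → R) (V : Matrix ι σ R) :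
    linearForm (q ᵥ* V) = (C ∘ q) ⬝ᵥ (linearForm ∘ V.row) := by
  simp only [linearForm, Matrix.vecMul, dotProduct, map_sum, map_mul, Finset.sum_mul,
    Finset.mul_sum, Function.comp_apply, Matrix.row_apply, mul_assoc]
  exact Finset.sum_comm

lemma isWeaklyRegular_C {σ : Type*} {q : Fin 3 → R} (hq : IsWeaklyRegular R [q 0, q 1, q 2]) :
    IsWeaklyRegular (MvPolynomial σ R) [(C (σ := σ) ∘ q) 0, (C ∘ q) 1, (C ∘ q) 2] :=
  hq.of_flat (S := MvPolynomial σ R)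

variable {q r : Fin 3 → R} {U V : Matrix (Fin 3) (Fin 3) R} {d : R} {m : ℕ}

lemma exists_smul_eq_mulVec_cross_mulVec (hq : IsWeaklyRegular R [q 0, q 1, q 2])
    (hr : (q ᵥ* U) ⨯₃ (q ᵥ* V) = r) : ∃ d : R, (V *ᵥ r) ⨯₃ (U *ᵥ r) = d • q := by
  refine exists_eq_smul_of_cross_eq_zero hq ?_
  rw [cross_cross_eq_dotProduct_smul_sub, Matrix.dotProduct_mulVec, Matrix.dotProduct_mulVec, ← hr,
    dot_self_cross, dot_cross_self, zero_smul, zero_smul, sub_zero]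

lemma mulVec_mem_span_range {ι κ : Type*} [Fintype κ] (A : Matrix ι κ R) (r : κ → R) (i : ι) :
    (A *ᵥ r) i ∈ Ideal.span (Set.range r) :=
  Ideal.sum_mem _ fun j _ ↦ Ideal.mul_mem_left _ _ (Ideal.subset_span ⟨j, rfl⟩)

lemma cross_mem_mul {K L : Ideal R} {u v : Fin 3 → R} (hu : ∀ i, u i ∈ K) (hv : ∀ i, v i ∈ L)
    (i : Fin 3) : (u ⨯₃ v) i ∈ K * L := by
  rw [cross_apply]
  fin_cases i <;> exact sub_mem (Ideal.mul_mem_mul (hu _) (hv _)) (Ideal.mul_mem_mul (hu _) (hv _))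

lemma mul_mem_sq_of_mulVec_cross_mulVec_eq_smul (hd : (V *ᵥ r) ⨯₃ (U *ᵥ r) = d • q) {s : R}
    (hs : s ∈ Ideal.span (Set.range q)) : d * s ∈ Ideal.span (Set.range r) ^ 2 := by
  have hle : Ideal.span (Set.range q) ≤ (Ideal.span (Set.range r) ^ 2).colon {d} := by
    rw [Ideal.span_le]
    rintro _ ⟨i, rfl⟩
    rw [SetLike.mem_coe, Submodule.mem_colon_singleton, smul_eq_mul, mul_comm, ← smul_eq_mul,
      ← Pi.smul_apply, ← hd, sq]
    exact cross_mem_mul (mulVec_mem_span_range V r) (mulVec_mem_span_range U r) i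
  rw [mul_comm]
  exact Submodule.mem_colon_singleton.1 (hle hs)

lemma isHomogeneous_linearForm_cross_linearForm (U V : Matrix (Fin 3) (Fin 3) R) (i : Fin 3) :
    (((linearForm ∘ V.row) ⨯₃ (linearForm ∘ U.row)) i).IsHomogeneous 2 :=
  isHomogeneous_cross (fun _ ↦ isHomogeneous_linearForm _) (fun _ ↦ isHomogeneous_linearForm _) i

lemma eval_linearForm_cross_linearForm (hd : (V *ᵥ r) ⨯₃ (U *ᵥ r) = d • q) (i : Fin 3) :
    eval r (((linearForm ∘ V.row) ⨯₃ (linearForm ∘ U.row)) i) = d * q i := by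
  have heval (A : Matrix (Fin 3) (Fin 3) R) : eval r ∘ linearForm ∘ A.row = A *ᵥ r :=
    _root_.funext fun j ↦ eval_linearForm (A j) r
  rw [map_cross, heval, heval, hd, Pi.smul_apply, smul_eq_mul]

lemma coeff_mem_span_of_mul_eval_mem_pow
    (hS : IsWeaklyRegular (MvPolynomial (Fin 3) R)
      [linearForm (q ᵥ* V), linearForm (q ᵥ* U), C (r 0)])
    (hr : (q ᵥ* U) ⨯₃ (q ᵥ* V) = r) (hd : (V *ᵥ r) ⨯₃ (U *ᵥ r) = d • q)
    {F : MvPolynomial (Fin 3) R} (hF : F.IsHomogeneous m)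
    (hdF : d * eval r F ∈ Ideal.span (Set.range r) ^ (m + 2)) (k : Fin 3 →₀ ℕ) :
    F.coeff k ∈ Ideal.span (Set.range q) := by
  obtain ⟨hf, hg, hk⟩ := isWeaklyRegular_triple_iff.1 hS
  obtain ⟨G, hG, hGr⟩ := (Ideal.mem_span_pow_iff_exists_isHomogeneous ..).1 hdF
  have hmem (i : Fin 3) :
      (F • ((linearForm ∘ V.row) ⨯₃ (linearForm ∘ U.row)) - G • (C ∘ q) :
          Fin 3 → MvPolynomial (Fin 3) R) i ∈
        Ideal.span {linearForm (q ᵥ* V), linearForm (q ᵥ* U)} := by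
    subst hr
    refine mem_span_linearForm_of_eval_eq_zero (n := m + 2) hk
      ((hF.mul (isHomogeneous_linearForm_cross_linearForm U V i)).sub
        (hG.mul (isHomogeneous_C _ (q i)))) ?_
    simp only [Pi.sub_apply, Pi.smul_apply, smul_eq_mul, Function.comp_apply, map_sub, map_mul,
      eval_C, eval_linearForm_cross_linearForm hd, hGr]
    ring
  simp only [linearForm_vecMul] at hf hg hmem
  have hFq := mem_span_range_of_smul_cross_sub_smul_mem hf hg hmem
  rw [Set.range_comp, ← Ideal.map_span, mem_map_C_iff] at hFq
  exact hFq k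

lemma exists_sub_mul_mem_pow (hq : IsWeaklyRegular R [q 0, q 1, q 2])
    (hS : IsWeaklyRegular (MvPolynomial (Fin 3) R)
      [linearForm (q ᵥ* V), linearForm (q ᵥ* U), C (r 0)])
    (hr : (q ᵥ* U) ⨯₃ (q ᵥ* V) = r) (hd : (V *ᵥ r) ⨯₃ (U *ᵥ r) = d • q) {s : R}
    (hs : ∀ i, q i * s ∈ Ideal.span (Set.range r) ^ (m + 2)) :
    ∃ w ∈ Ideal.span (Set.range r) ^ m, s - d * w ∈ Ideal.span (Set.range r) ^ (m + 2) := by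
  obtain ⟨hf, hg, hk⟩ := isWeaklyRegular_triple_iff.1 hS
  choose F hF hFr using fun i ↦ (Ideal.mem_span_pow_iff_exists_isHomogeneous ..).1 (hs i)
  have hcross (i : Fin 3) : ((C ∘ q) ⨯₃ F) i ∈
      Ideal.span {linearForm (q ᵥ* V), linearForm (q ᵥ* U)} := by
    subst hr
    refine mem_span_linearForm_of_eval_eq_zero hk
      (isHomogeneous_cross (fun i ↦ isHomogeneous_C _ (q i)) hF i) ?_
    have hFq : eval ((q ᵥ* U) ⨯₃ (q ᵥ* V)) ∘ F = s • q := by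
      ext i
      simp [hFr, mul_comm]
    have hCq : eval ((q ᵥ* U) ⨯₃ (q ᵥ* V)) ∘ C ∘ q = q := by
      ext i
      simp
    rw [map_cross, hFq, hCq, map_smul, cross_self, smul_zero, Pi.zero_apply]
  simp only [linearForm_vecMul] at hf hg hcross
  obtain ⟨E, W, hEW⟩ := exists_sub_smul_cross_sub_smul_mem (isWeaklyRegular_C hq) hf hg hcross
  simp only [← linearForm_vecMul] at hEW
  have hrees := reesMap_eq_zero_of_mem_span_linearForm (hEW 0)
  simp only [hr, Pi.sub_apply, Pi.smul_apply, smul_eq_mul, map_sub, map_mul, Function.comp_apply,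
    reesMap_of_isHomogeneous r (hF 0), hFr,
    reesMap_of_isHomogeneous r (isHomogeneous_linearForm_cross_linearForm U V 0),
    eval_linearForm_cross_linearForm hd,
    reesMap_of_isHomogeneous r (isHomogeneous_C _ (q 0)), eval_C] at hrees
  have hcoeff := congrArg (Polynomial.coeff · (m + 2)) hrees
  simp only [pow_zero, one_mul, Polynomial.coeff_sub, ← mul_assoc, Polynomial.coeff_mul_C,
    Polynomial.coeff_X_pow_self, Polynomial.coeff_mul_X_pow, Polynomial.coeff_zero] at hcoeff
  have hsEW : s - (reesMap r E).coeff m * d - (reesMap r W).coeff (m + 2) = 0 :=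
    (Submodule.mem_bot R).1 ((isWeaklyRegular_triple_iff.1 hq).1 _ (by
      rw [Ideal.mem_bot]
      linear_combination hcoeff))
  refine ⟨_, coeff_reesMap_mem r E m, ?_⟩
  rw [mul_comm, sub_eq_zero.1 hsEW]
  exact coeff_reesMap_mem r W (m + 2)

lemma mul_eval_mem_pow_of_forall_coeff_mem (hd : (V *ᵥ r) ⨯₃ (U *ᵥ r) = d • q)
    {F : MvPolynomial (Fin 3) R} (hF : F.IsHomogeneous m)
    (hFq : ∀ k, F.coeff k ∈ Ideal.span (Set.range q)) :
    d * eval r F ∈ Ideal.span (Set.range r) ^ (m + 2) := by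
  rw [eval_eq, Finset.mul_sum, add_comm, pow_add]
  refine sum_mem fun k hk ↦ ?_
  rw [← mul_assoc]
  refine Ideal.mul_mem_mul (mul_mem_sq_of_mulVec_cross_mulVec_eq_smul hd (hFq k))
    ((Ideal.mem_span_pow_iff_exists_isHomogeneous ..).2 ⟨monomial k 1,
      isHomogeneous_monomial 1 (not_imp_comm.1 hF.coeff_eq_zero (mem_support_iff.1 hk)), ?_⟩)
  simp [eval_monomial, Finsupp.prod]

lemma mul_eval_mem_colon (hd : (V *ᵥ r) ⨯₃ (U *ᵥ r) = d • q) {F : MvPolynomial (Fin 3) R}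
    (hF : F.IsHomogeneous m) :
    d * eval r F ∈ Submodule.colon (Ideal.span (Set.range r) ^ (m + 2) : Ideal R)
      (Ideal.span (Set.range q) : Set R) := by
  refine Submodule.mem_colon.2 fun s hs ↦ ?_
  rw [smul_eq_mul, mul_right_comm, add_comm, pow_add]
  exact Ideal.mul_mem_mul (mul_mem_sq_of_mulVec_cross_mulVec_eq_smul hd hs)
    ((Ideal.mem_span_pow_iff_exists_isHomogeneous ..).2 ⟨F, hF, rfl⟩)

end Colon

section CoefficientVectors

open MvPolynomial

variable {R σ : Type*} [CommRing R] [Fintype σ] [DecidableEq σ]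

/-- The form of degree `m` with a prescribed vector of coefficients. -/
noncomputable def formOfCoeffs (m : ℕ) :
    (Finset.finsuppAntidiag (Finset.univ : Finset σ) m → R) →ₗ[R] MvPolynomial σ R :=
  Fintype.linearCombination R fun k ↦ monomial k.1 1

variable {m : ℕ}

lemma mem_finsuppAntidiag_univ_iff_degree_eq {k : σ →₀ ℕ} :
    k ∈ Finset.finsuppAntidiag (Finset.univ : Finset σ) m ↔ k.degree = m := by
  simp [Finset.mem_finsuppAntidiag, Finsupp.degree_eq_sum]

lemma coeff_formOfCoeffs (e : Finset.finsuppAntidiag (Finset.univ : Finset σ) m → R)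
    (k : Finset.finsuppAntidiag (Finset.univ : Finset σ) m) :
    (formOfCoeffs m e).coeff k.1 = e k := by
  simp [formOfCoeffs, Fintype.linearCombination_apply, coeff_sum, coeff_monomial]

lemma isHomogeneous_formOfCoeffs (e : Finset.finsuppAntidiag (Finset.univ : Finset σ) m → R) :
    (formOfCoeffs m e).IsHomogeneous m := by
  refine (homogeneousSubmodule σ R m).sum_mem fun k _ ↦ Submodule.smul_mem _ _ ?_
  exact isHomogeneous_monomial 1 (mem_finsuppAntidiag_univ_iff_degree_eq.1 k.2)

lemma exists_formOfCoeffs_eq {F : MvPolynomial σ R} (hF : F.IsHomogeneous m) :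
    ∃ e, formOfCoeffs m e = F := by
  refine ⟨fun k ↦ F.coeff k.1, ext _ _ fun k ↦ ?_⟩
  by_cases hk : k ∈ Finset.finsuppAntidiag (Finset.univ : Finset σ) m
  · exact coeff_formOfCoeffs _ ⟨k, hk⟩
  · rw [mem_finsuppAntidiag_univ_iff_degree_eq] at hk
    rw [hF.coeff_eq_zero hk, (isHomogeneous_formOfCoeffs _).coeff_eq_zero hk]

lemma forall_coeff_formOfCoeffs_mem_iff {J : Ideal R}
    {e : Finset.finsuppAntidiag (Finset.univ : Finset σ) m → R} :
    (∀ k, (formOfCoeffs m e).coeff k ∈ J) ↔ ∀ k, e k ∈ J := by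
  refine ⟨fun h k ↦ coeff_formOfCoeffs e k ▸ h k, fun h k ↦ ?_⟩
  by_cases hk : k ∈ Finset.finsuppAntidiag (Finset.univ : Finset σ) m
  · exact (coeff_formOfCoeffs e ⟨k, hk⟩).symm ▸ h ⟨k, hk⟩
  · rw [mem_finsuppAntidiag_univ_iff_degree_eq] at hk
    exact (isHomogeneous_formOfCoeffs e).coeff_eq_zero hk ▸ J.zero_mem

end CoefficientVectors

lemma nonempty_linearEquiv_pi_quotient {R M ι : Type*} [CommRing R] [AddCommGroup M] [Module R M]
    [Fintype ι] {A B : Submodule R M} {J : Ideal R} (Θ : (ι → R) →ₗ[R] M) (hA : ∀ e, Θ e ∈ A)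
    (hsurj : ∀ s ∈ A, ∃ e, s - Θ e ∈ B) (hker : ∀ e, Θ e ∈ B ↔ ∀ i, e i ∈ J) :
    Nonempty ((A ⧸ B.comap A.subtype) ≃ₗ[R] (Fin (Fintype.card ι) → R ⧸ J)) := by
  classical
  let Ψ : (ι → R) →ₗ[R] A ⧸ B.comap A.subtype := (Submodule.mkQ _).comp (Θ.codRestrict A hA)
  have hΨ : Function.Surjective Ψ := fun t ↦ by
    obtain ⟨s, rfl⟩ := Submodule.mkQ_surjective _ t
    obtain ⟨e, he⟩ := hsurj s s.2
    exact ⟨e, .symm ((Submodule.Quotient.eq (B.comap A.subtype)).2 he)⟩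
  have hΨker : LinearMap.ker Ψ = Submodule.pi Set.univ fun _ ↦ J := by
    ext e
    rw [LinearMap.mem_ker, LinearMap.comp_apply, Submodule.mkQ_apply,
      Submodule.Quotient.mk_eq_zero, Submodule.mem_comap, Submodule.mem_pi]
    simpa using hker e
  exact ⟨(Ψ.quotKerEquivOfSurjective hΨ).symm ≪≫ₗ Submodule.quotEquivOfEq _ _ hΨker ≪≫ₗ
    Submodule.quotientPi (fun _ ↦ J) ≪≫ₗ
    LinearEquiv.funCongrLeft R (R ⧸ J) (Fintype.equivFin ι).symm⟩

lemma exists_vecMul_eq {R ι κ : Type*} [CommRing R] [Fintype ι] {q : ι → R} {w : κ → R}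
    (hw : ∀ j, w j ∈ Ideal.span (Set.range q)) : ∃ W : Matrix ι κ R, q ᵥ* W = w := by
  choose W hW using fun j ↦ Ideal.mem_span_range_iff_exists_fun.1 (hw j)
  refine ⟨.of fun i j ↦ W j i, funext fun j ↦ ?_⟩
  simp [← hW j, Matrix.vecMul, dotProduct, mul_comm]

theorem nonempty_colon_pow_quotient_linearEquiv {R : Type*} [CommRing R] {q u v r : Fin 3 → R}
    (hq : IsWeaklyRegular R [q 0, q 1, q 2]) (hr : u ⨯₃ v = r) {I Q : Ideal R}
    (hI : I = Ideal.span (Set.range r)) (hQ : Q = Ideal.span (Set.range q))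
    (hu : ∀ i, u i ∈ Q) (hv : ∀ i, v i ∈ Q)
    (hreg : ∀ l : List R, l.Perm [r 0, v 0, r 2] → IsWeaklyRegular R l) (m : ℕ) :
    Nonempty
      ((Submodule.colon (I ^ (m + 2) : Ideal R) (Q : Set R) ⧸
          Submodule.comap (Submodule.colon (I ^ (m + 2) : Ideal R) (Q : Set R)).subtype
            (I ^ (m + 2) : Ideal R))
        ≃ₗ[R] (Fin ((m + 2).choose 2) → R ⧸ Q)) := by
  subst hI hQ
  obtain ⟨U, rfl⟩ := exists_vecMul_eq hu
  obtain ⟨V, rfl⟩ := exists_vecMul_eq hv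
  have hS := isWeaklyRegular_linearForm_linearForm_C (u := q ᵥ* U) (v := q ᵥ* V) (by rwa [hr])
  obtain ⟨d, hd⟩ := exists_smul_eq_mulVec_cross_mulVec hq hr
  have hcard : Fintype.card (Finset.finsuppAntidiag (Finset.univ : Finset (Fin 3)) m) =
      (m + 2).choose 2 := by
    rw [Fintype.card_coe, Finset.card_finsuppAntidiag_nat_eq_choose, Finset.card_univ,
      Fintype.card_fin, ← Nat.choose_symm_add]
    congr 1
    omega
  rw [← hcard]
  refine nonempty_linearEquiv_pi_quotient
    (LinearMap.mulLeft R d ∘ₗ (MvPolynomial.aeval r).toLinearMap ∘ₗ formOfCoeffs m)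
    (fun e ↦ mul_eval_mem_colon hd (isHomogeneous_formOfCoeffs e)) (fun s hs ↦ ?_) (fun e ↦ ?_)
  · obtain ⟨w, hw, hsw⟩ := exists_sub_mul_mem_pow hq hS hr hd (s := s) fun i ↦ by
      simpa [mul_comm] using Submodule.mem_colon.1 hs (q i) (Ideal.subset_span ⟨i, rfl⟩)
    obtain ⟨F, hF, rfl⟩ := (Ideal.mem_span_pow_iff_exists_isHomogeneous ..).1 hw
    obtain ⟨e, rfl⟩ := exists_formOfCoeffs_eq hF
    exact ⟨e, hsw⟩
  · have he := isHomogeneous_formOfCoeffs e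
    rw [← forall_coeff_formOfCoeffs_mem_iff]
    exact ⟨coeff_mem_span_of_mul_eval_mem_pow hS hr hd he,
      mul_eval_mem_pow_of_forall_coeff_mem hd he⟩

section SystemOfParameters

variable {R : Type*} [CommRing R] {x y z : R}

lemma radical_span_eq_radical_span {s t : Set R} (hst : s ⊆ (Ideal.span t).radical)
    (hts : t ⊆ (Ideal.span s).radical) : (Ideal.span s).radical = (Ideal.span t).radical :=
  le_antisymm (Ideal.radical_le_radical_iff.2 (Ideal.span_le.2 hst))
    (Ideal.radical_le_radical_iff.2 (Ideal.span_le.2 hts))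

lemma radical_span_pow_sub_triple {s t : R} {i j k : ℕ} (hi : 0 < i) (hj : 0 < j) (hk : 0 < k)
    (hs : x ∣ s) (ht : x ∣ t) : (Ideal.span {x ^ i, y ^ j - s, z ^ k - t}).radical =
      (Ideal.span {x, y, z}).radical := by
  refine radical_span_eq_radical_span ?_ ?_
  · have hx : x ∈ Ideal.span {x, y, z} := Ideal.subset_span (by simp)
    have hy : y ∈ Ideal.span {x, y, z} := Ideal.subset_span (by simp)
    have hz : z ∈ Ideal.span {x, y, z} := Ideal.subset_span (by simp)
    rintro _ (rfl | rfl | rfl) <;> refine Ideal.le_radical ?_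
    exacts [Ideal.pow_mem_of_mem _ hx _ hi,
      sub_mem (Ideal.pow_mem_of_mem _ hy _ hj) (Ideal.mem_of_dvd _ hs hx),
      sub_mem (Ideal.pow_mem_of_mem _ hz _ hk) (Ideal.mem_of_dvd _ ht hx)]
  · have hx : x ∈ (Ideal.span {x ^ i, y ^ j - s, z ^ k - t}).radical :=
      ⟨i, Ideal.subset_span (by simp)⟩
    rintro _ (rfl | rfl | rfl)
    · exact hx
    · exact Ideal.mem_radical_of_pow_mem (m := j) ((Submodule.sub_mem_iff_left _
        (Ideal.mem_of_dvd _ hs hx)).1 (Ideal.le_radical (Ideal.subset_span (by simp))))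
    · exact Ideal.mem_radical_of_pow_mem (m := k) ((Submodule.sub_mem_iff_left _
        (Ideal.mem_of_dvd _ ht hx)).1 (Ideal.le_radical (Ideal.subset_span (by simp))))

lemma isWeaklyRegular_of_perm {u v w : R} (h : ∀ u' v' w' : R,
      Ideal.span {u', v', w'} = Ideal.span {u, v, w} → IsWeaklyRegular R [u', v', w'])
    {l : List R} (hl : l.Perm [u, v, w]) : IsWeaklyRegular R l := by
  obtain ⟨u', v', w', rfl⟩ := List.length_eq_three.1 hl.length_eq
  refine h u' v' w' (congrArg Ideal.span (Set.ext fun s ↦ ?_))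
  simpa using hl.mem_iff (a := s)

lemma isWeaklyRegular_pow_triple (h : ∀ u v w : R,
      (Ideal.span {u, v, w}).radical = (Ideal.span {x, y, z}).radical →
        IsWeaklyRegular R [u, v, w]) {i j k : ℕ} (hi : 0 < i) (hj : 0 < j) (hk : 0 < k) :
    IsWeaklyRegular R [x ^ i, y ^ j, z ^ k] :=
  h _ _ _ (by simpa using radical_span_pow_sub_triple hi hj hk (dvd_zero x) (dvd_zero x))

lemma isWeaklyRegular_of_perm_minor_pow_minor (h : ∀ u v w : R,
      (Ideal.span {u, v, w}).radical = (Ideal.span {x, y, z}).radical →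
        IsWeaklyRegular R [u, v, w]) {s t : R} {i i' j k : ℕ} (hi : 0 < i) (hi' : 0 < i')
    (hj : 0 < j) (hk : 0 < k) {l : List R}
    (hl : l.Perm [z ^ k - x ^ i' * s, x ^ i, y ^ j - x ^ i * t]) : IsWeaklyRegular R l := by
  refine isWeaklyRegular_of_perm (fun u v w huvw ↦ h u v w ?_)
    (hl.trans (List.perm_append_comm (l₁ := [_]) (l₂ := [_, _])))
  rw [huvw]
  exact radical_span_pow_sub_triple hi hj hk ((dvd_pow_self x hi.ne').mul_right _)
    ((dvd_pow_self x hi'.ne').mul_right _)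

lemma cross_pow_pow (x y z : R) (α β γ α' β' γ' : ℕ) :
    ![y ^ β', z ^ γ', x ^ α'] ⨯₃ ![x ^ α, y ^ β, z ^ γ] =
      ![z ^ (γ + γ') - x ^ α' * y ^ β, x ^ (α + α') - y ^ β' * z ^ γ,
        y ^ (β + β') - x ^ α * z ^ γ'] := by
  rw [cross_apply]
  ext i
  fin_cases i <;> simp [pow_add, mul_comm]

end SystemOfParameters

theorem colon_power_quotient_iso_general {R : Type*} [CommRing R] (x y z : R)
    (hreg : ∀ u v w : R, (Ideal.span {u, v, w}).radical = (Ideal.span {x, y, z}).radical →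
      IsWeaklyRegular R [u, v, w])
    (α β γ α' β' γ' : ℕ)
    (hα : 0 < α) (hβ : 0 < β) (hγ : 0 < γ)
    (hα' : 0 < α') (hβ' : 0 < β') (hγ' : 0 < γ')
    (a b c : R)
    (ha : a = z ^ (γ + γ') - x ^ α' * y ^ β)
    (hb : b = x ^ (α + α') - y ^ β' * z ^ γ)
    (hc : c = y ^ (β + β') - x ^ α * z ^ γ')
    (I : Ideal R) (hI : I = Ideal.span {a, b, c})
    (Q : Ideal R)
    (hQ : Q = Ideal.span {x ^ min α α', y ^ min β β', z ^ min γ γ'})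
    (n : ℕ) (hn : 2 ≤ n) :
    Nonempty
      ((↥(Submodule.colon (I ^ n : Ideal R) (Q : Set R)) ⧸
          Submodule.comap (Submodule.colon (I ^ n : Ideal R) (Q : Set R)).subtype
            (I ^ n : Ideal R))
        ≃ₗ[R] (Fin (n.choose 2) → R ⧸ Q)) := by
  obtain ⟨m, rfl⟩ := Nat.exists_eq_add_of_le' hn
  have hrange (s t w : R) : {s, t, w} = Set.range ![s, t, w] := by
    rw [Matrix.range_cons, Matrix.range_cons_cons_empty, Set.singleton_union]
  have hpow {s : R} {i j : ℕ} (hs : s ^ i ∈ Q) (hij : i ≤ j) : s ^ j ∈ Q :=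
    Ideal.mem_of_dvd Q (pow_dvd_pow s hij) hs
  have hx : x ^ min α α' ∈ Q := hQ ▸ Ideal.subset_span (by simp)
  have hy : y ^ min β β' ∈ Q := hQ ▸ Ideal.subset_span (by simp)
  have hz : z ^ min γ γ' ∈ Q := hQ ▸ Ideal.subset_span (by simp)
  have hu (i : Fin 3) : ![y ^ β', z ^ γ', x ^ α'] i ∈ Q := by
    fin_cases i
    exacts [hpow hy (min_le_right β β'), hpow hz (min_le_right γ γ'), hpow hx (min_le_right α α')]
  have hv (i : Fin 3) : ![x ^ α, y ^ β, z ^ γ] i ∈ Q := by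
    fin_cases i
    exacts [hpow hx (min_le_left α α'), hpow hy (min_le_left β β'), hpow hz (min_le_left γ γ')]
  rw [hrange] at hI hQ
  subst ha hb hc
  exact nonempty_colon_pow_quotient_linearEquiv
    (isWeaklyRegular_pow_triple hreg (lt_min hα hα') (lt_min hβ hβ') (lt_min hγ hγ'))
    (cross_pow_pow x y z α β γ α' β' γ') hI hQ hu hv
    (fun l ↦ isWeaklyRegular_of_perm_minor_pow_minor hreg hα hα' (by omega) (by omega)) m

/-- With `Q = (x^{min(α,α')}, y^{min(β,β')}, z^{min(γ,γ')})`, for every `n ≥ 2`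
one has `(Iⁿ :_R Q)/Iⁿ ≅ (R/Q)^{⊕ n(n-1)/2}`. -/
theorem colon_power_quotient_iso
    {R : Type*} [CommRing R] [IsNoetherianRing R] [IsLocalRing R]
    (hdim : ringKrullDim R = 3)
    (hCM : ∀ u v w : R, (Ideal.span {u, v, w}).radical = maximalIdeal R →
      RingTheory.Sequence.IsRegular R [u, v, w])
    (x y z : R) (hsop : (Ideal.span {x, y, z}).radical = maximalIdeal R)
    (α β γ α' β' γ' : ℕ)
    (hα : 0 < α) (hβ : 0 < β) (hγ : 0 < γ)
    (hα' : 0 < α') (hβ' : 0 < β') (hγ' : 0 < γ')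
    (a b c : R)
    (ha : a = z ^ (γ + γ') - x ^ α' * y ^ β)
    (hb : b = x ^ (α + α') - y ^ β' * z ^ γ)
    (hc : c = y ^ (β + β') - x ^ α * z ^ γ')
    (I : Ideal R) (hI : I = Ideal.span {a, b, c})
    (Q : Ideal R)
    (hQ : Q = Ideal.span {x ^ min α α', y ^ min β β', z ^ min γ γ'})
    (n : ℕ) (hn : 2 ≤ n) :
    Nonempty
      ((↥(Submodule.colon ((I ^ n : Ideal R) : Submodule R R) (Q : Submodule R R)) ⧸
          Submodule.comap
            (Submodule.colon ((I ^ n : Ideal R) : Submodule R R) (Q : Submodule R R)).subtype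
            ((I ^ n : Ideal R) : Submodule R R))
        ≃ₗ[R] (Fin (n.choose 2) → R ⧸ Q)) :=
  colon_power_quotient_iso_general x y z
    (fun u v w h ↦ (hCM u v w (h.trans hsop)).toIsWeaklyRegular)
    α β γ α' β' γ' hα hβ hγ hα' hβ' hγ' a b c ha hb hc I hI Q hQ n hn
end

section
/- With Q = (x^{α''}, y^{β''}, z^{γ''})R for α'' = min(α,α'), β'' = min(β,β'), γ'' = min(γ,γ'), one has I^{(2)} = I² :_R Q, and I^{(2)}/I² ≅ R/Q. Here I^{(2)} is the second symbolic power of I. -/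
open IsLocalRing

/-- The `n`-th symbolic power `I⁽ⁿ⁾ = ⋂_{p ∈ Min(R/I)} (IⁿR_p ∩ R)`. -/
noncomputable def symbolicPower {R : Type*} [CommRing R] (I : Ideal R) (n : ℕ) : Ideal R :=
  ⨅ p : I.minimalPrimes,
    haveI : Ideal.IsPrime (p : Ideal R) := p.2.1.1
    Ideal.comap (algebraMap R (Localization.AtPrime (p : Ideal R)))
      (Ideal.map (algebraMap R (Localization.AtPrime (p : Ideal R))) (I ^ n))

/-!
Let `ρ` and `σ` be the rows of the matrix and `m = ρ × σ` the vector of its minors. As the minors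
contain a regular sequence of length two and the first column followed by the minor complementary to
it is a regular sequence of length three, the complex `0 → R → R³ × R³ → Sym² R³ → R` with
differentials `w ↦ (w σ, -w ρ)`, `(s, t) ↦ ρ s + σ t` and `φ ↦ φ(m)` is exact except at the right
end, where the image is `I²`. So it is a free resolution of `R ⧸ I²`.

For a regular sequence `q` of length three, comparing this resolution with the Koszul complex of `q`
identifies `(I² : q) / I²` with `Tor₃(R ⧸ I², R ⧸ (q))`, that is, with the classes in `R ⧸ (q)` of
those `w` for which `w ρ` and `w σ` vanish modulo `q`. These classes are annihilated by all entries
of the matrix, and the entries generate `Q`, so `I² : q ⊆ I² : Q`. When `(q) = Q` the condition on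
`w` is empty and `(I² : Q) / I² ≅ R ⧸ Q`.

Finally `R ⧸ I` has dimension one and positive depth, so `r` lies in the second symbolic power
exactly when `I² : r` is primary to the maximal ideal or trivial, hence contains such a
sequence `q`.
-/

open RingTheory.Sequence
open scoped Matrix

section Koszul

variable {R M N : Type*} [CommRing R] [AddCommGroup M] [Module R M] [AddCommGroup N] [Module R N]

lemma isWeaklyRegular_pair_iff {u v : R} :
    IsWeaklyRegular M [u, v] ↔
      (∀ m : M, u • m = 0 → m = 0) ∧ ∀ m n : M, v • m = u • n → ∃ p, m = u • p := by
  rw [isWeaklyRegular_iff_Fin]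
  simp only [List.length_cons, List.length_nil, Fin.forall_fin_succ, IsEmpty.forall_iff, and_true,
    isSMulRegular_quotient_iff_mem_of_smul_mem]
  simp [Submodule.ideal_span_singleton_smul, Submodule.mem_smul_pointwise_iff_exists, eq_comm]

lemma isWeaklyRegular_triple_iff_s12 {u v w : R} :
    IsWeaklyRegular M [u, v, w] ↔
      (∀ m : M, u • m = 0 → m = 0) ∧
      (∀ m n : M, v • m = u • n → ∃ p, m = u • p) ∧
      ∀ m n n' : M, w • m = u • n + v • n' → ∃ p p', m = u • p + v • p' := by
  rw [isWeaklyRegular_iff_Fin]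
  simp only [List.length_cons, List.length_nil, Fin.forall_fin_succ, IsEmpty.forall_iff, and_true,
    isSMulRegular_quotient_iff_mem_of_smul_mem]
  simp [Submodule.mem_sup, Submodule.ideal_span_singleton_smul,
    Submodule.mem_smul_pointwise_iff_exists, Submodule.sup_smul, eq_comm]

lemma isWeaklyRegular_of_flat (M : Type*) [AddCommGroup M] [Module R M] [Module.Flat R M]
    {rs : List R} (h : IsWeaklyRegular R rs) : IsWeaklyRegular M rs :=
  ((TensorProduct.lid R M).isWeaklyRegular_congr rs).1 h.isWeaklyRegular_rTensor

/-- The differential `q ∧ ·` of the Koszul complex of `q` with coefficients in `M`, from degree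
two to degree one, both of which are identified with `M³`. -/
def koszulCross (q : Fin 3 → R) : (Fin 3 → M) →ₗ[R] Fin 3 → M where
  toFun f := ![q 1 • f 2 - q 2 • f 1, q 2 • f 0 - q 0 • f 2, q 0 • f 1 - q 1 • f 0]
  map_add' f f' := by ext i; fin_cases i <;> simp <;> module
  map_smul' r f := by ext i; fin_cases i <;> simp <;> module

lemma koszulCross_apply (q : Fin 3 → R) (f : Fin 3 → M) :
    koszulCross q f =
      ![q 1 • f 2 - q 2 • f 1, q 2 • f 0 - q 0 • f 2, q 0 • f 1 - q 1 • f 0] := rfl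

lemma sum_smul_koszulCross (q : Fin 3 → R) (f : Fin 3 → M) :
    ∑ i, q i • koszulCross q f i = 0 := by
  simp only [koszulCross_apply, Fin.sum_univ_three, Matrix.cons_val]
  module

lemma koszulCross_smul (q : Fin 3 → R) (m : M) : koszulCross q (fun i => q i • m) = 0 := by
  ext i; fin_cases i <;> simp [koszulCross_apply] <;> module

lemma map_koszulCross (φ : M →ₗ[R] N) (q : Fin 3 → R) (f : Fin 3 → M) (i : Fin 3) :
    φ (koszulCross q f i) = koszulCross q (φ ∘ f) i := by
  fin_cases i <;> simp [koszulCross_apply]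

lemma exists_koszulCross_eq {q : Fin 3 → R} (hq : IsWeaklyRegular M [q 0, q 1, q 2])
    {e : Fin 3 → M} (he : ∑ i, q i • e i = 0) : ∃ f, koszulCross q f = e := by
  obtain ⟨h0, h1, h2⟩ := isWeaklyRegular_triple_iff_s12.1 hq
  rw [Fin.sum_univ_three] at he
  obtain ⟨s, t, hst⟩ := h2 (e 2) (-e 0) (-e 1) (by linear_combination (norm := module) he)
  rw [hst] at he
  obtain ⟨r, hr⟩ := h1 (e 1 + q 2 • t) (-(e 0 + q 2 • s)) (by
    linear_combination (norm := module) he)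
  have hr' : e 0 + q 2 • s + q 1 • r = 0 := h0 _ (by
    linear_combination (norm := module) he - q 1 • hr)
  refine ⟨![-t, s, -r], funext fun i => ?_⟩
  fin_cases i <;> simp only [koszulCross_apply, Fin.reduceFinMk, Fin.zero_eta, Fin.mk_one,
    Matrix.cons_val]
  · linear_combination (norm := module) -hr'
  · linear_combination (norm := module) -hr
  · linear_combination (norm := module) -hst

lemma exists_eq_smul_of_koszulCross_eq_zero {q : Fin 3 → R}
    (hq : IsWeaklyRegular M [q 0, q 1, q 2]) {f : Fin 3 → M} (hf : koszulCross q f = 0) :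
    ∃ m, ∀ i, f i = q i • m := by
  obtain ⟨h0, h1, -⟩ := isWeaklyRegular_triple_iff_s12.1 hq
  have h01 : q 0 • f 1 - q 1 • f 0 = 0 := congrFun hf 2
  have h20 : q 2 • f 0 - q 0 • f 2 = 0 := congrFun hf 1
  obtain ⟨m, hm⟩ := h1 (f 0) (f 1) (sub_eq_zero.1 h01).symm
  rw [hm] at h01 h20
  refine ⟨m, fun i => ?_⟩
  fin_cases i
  · exact hm
  · exact sub_eq_zero.1 (h0 (f 1 - q 1 • m) (by linear_combination (norm := module) h01))
  · exact sub_eq_zero.1 (h0 (f 2 - q 2 • m) (by linear_combination (norm := module) -h20))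

end Koszul

section KoszulLink

variable {R F₀ F₁ F₂ F₃ : Type*} [CommRing R] [AddCommGroup F₀] [Module R F₀]
  [AddCommGroup F₁] [Module R F₁] [AddCommGroup F₂] [Module R F₂] [AddCommGroup F₃] [Module R F₃]
  {g : F₁ →ₗ[R] F₀} {h : F₂ →ₗ[R] F₁} {k : F₃ →ₗ[R] F₂} {q : Fin 3 → R}

/-- Two elements at opposite ends of a complex `F₃ → F₂ → F₁ → F₀` are linked if they are joined by
a zigzag through the double complex obtained by tensoring it with the Koszul complex of `q`. If
`F₃ → ⋯ → F₀` is a free resolution of its cokernel and `q` is regular, linkage is the isomorphism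
between the elements of the cokernel killed by `q` and `Tor₃` of the cokernel and `R ⧸ (q)`. -/
def KoszulLink (g : F₁ →ₗ[R] F₀) (h : F₂ →ₗ[R] F₁) (k : F₃ →ₗ[R] F₂) (q : Fin 3 → R)
    (u : F₀) (w : F₃) : Prop :=
  ∃ (f : Fin 3 → F₁) (e : Fin 3 → F₂), (∀ i, g (f i) = q i • u) ∧
    (∀ i, h (e i) = koszulCross q f i) ∧ k w = ∑ i, q i • e i

lemma KoszulLink.smul {u : F₀} {w : F₃} (r : R) (hl : KoszulLink g h k q u w) :
    KoszulLink g h k q (r • u) (r • w) := by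
  obtain ⟨f, e, hf, he, hw⟩ := hl
  refine ⟨r • f, r • e, fun i => ?_, fun i => ?_, ?_⟩
  · rw [Pi.smul_apply, map_smul, hf, smul_comm]
  · rw [map_smul, Pi.smul_apply, Pi.smul_apply, map_smul, he]
  · simp only [map_smul, hw, Finset.smul_sum, Pi.smul_apply, smul_comm r]

lemma KoszulLink.sub {u u' : F₀} {w w' : F₃} (hl : KoszulLink g h k q u w)
    (hl' : KoszulLink g h k q u' w') : KoszulLink g h k q (u - u') (w - w') := by
  obtain ⟨f, e, hf, he, hw⟩ := hl
  obtain ⟨f', e', hf', he', hw'⟩ := hl'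
  refine ⟨f - f', e - e', fun i => ?_, fun i => ?_, ?_⟩
  · rw [Pi.sub_apply, map_sub, hf, hf', smul_sub]
  · rw [map_sub, Pi.sub_apply, Pi.sub_apply, map_sub, he, he']
  · simp only [map_sub, hw, hw', Pi.sub_apply, smul_sub, Finset.sum_sub_distrib]

lemma exists_koszulLink_of_smul_mem_range (hhg : Function.Exact h g) (hkh : Function.Exact k h)
    {u : F₀} (hu : ∀ i, q i • u ∈ LinearMap.range g) : ∃ w, KoszulLink g h k q u w := by
  choose f hf using hu
  have hgf (i) : g (koszulCross q f i) = 0 := by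
    rw [map_koszulCross, funext hf (f := g ∘ f), koszulCross_smul, Pi.zero_apply]
  choose e he using fun i => (hhg _).1 (hgf i)
  obtain ⟨w, hw⟩ := (hkh (∑ i, q i • e i)).1 (by
    simp only [map_sum, map_smul, he, sum_smul_koszulCross])
  exact ⟨w, f, e, hf, he, hw⟩

lemma KoszulLink.exists_eq_sum_smul (hhg : Function.Exact h g) (hkh : Function.Exact k h)
    (hk : Function.Injective k) {u : F₀} {w : F₃} (hl : KoszulLink g h k q u w)
    (hu : u ∈ LinearMap.range g) : ∃ v : Fin 3 → F₃, w = ∑ i, q i • v i := by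
  obtain ⟨f, e, hf, he, hw⟩ := hl
  obtain ⟨m, rfl⟩ := hu
  have hgf (i) : g (f i - q i • m) = 0 := by rw [map_sub, map_smul, hf, sub_self]
  choose f' hf' using fun i => (hhg _).1 (hgf i)
  have hhe (i) : h (e i - koszulCross q f' i) = 0 := by
    have : h ∘ f' = f - fun i => q i • m := funext hf'
    rw [map_sub, map_koszulCross, this, map_sub, koszulCross_smul, sub_zero, he, sub_self]
  choose v hv using fun i => (hkh _).1 (hhe i)
  refine ⟨v, hk ?_⟩
  simp only [map_sum, map_smul, hv, hw, smul_sub, Finset.sum_sub_distrib, sum_smul_koszulCross,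
    sub_zero]

variable [Module.Flat R F₀] [Module.Flat R F₁] (hq : IsWeaklyRegular R [q 0, q 1, q 2])
include hq

lemma exists_koszulLink_of_map_eq_sum_smul (hhg : Function.Exact h g) (hkh : Function.Exact k h)
    {w : F₃} {e : Fin 3 → F₂} (hw : k w = ∑ i, q i • e i) : ∃ u, KoszulLink g h k q u w := by
  obtain ⟨f, hf⟩ := exists_koszulCross_eq (isWeaklyRegular_of_flat F₁ hq) (e := h ∘ e) (by
    simp only [Function.comp_apply, ← map_smul, ← map_sum, ← hw, hkh.apply_apply_eq_zero])
  obtain ⟨u, hu⟩ := exists_eq_smul_of_koszulCross_eq_zero (isWeaklyRegular_of_flat F₀ hq)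
    (f := g ∘ f) (funext fun i => by
      rw [← map_koszulCross, hf]; exact hhg.apply_apply_eq_zero _)
  exact ⟨u, f, e, hu, fun i => (congrFun hf i).symm, hw⟩

lemma KoszulLink.mem_range [Module.Flat R F₂] (hhg : Function.Exact h g)
    (hkh : Function.Exact k h) {u : F₀} {w : F₃} (hl : KoszulLink g h k q u w)
    {v : Fin 3 → F₃} (hv : w = ∑ i, q i • v i) : u ∈ LinearMap.range g := by
  obtain ⟨f, e, hf, he, hw⟩ := hl
  obtain ⟨f', hf'⟩ := exists_koszulCross_eq (isWeaklyRegular_of_flat F₂ hq)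
    (e := e - k ∘ v) (by
      simp only [Pi.sub_apply, Function.comp_apply, smul_sub, Finset.sum_sub_distrib, ← hw, hv,
        map_sum, map_smul, sub_self])
  have hff' : koszulCross q (f - h ∘ f') = 0 := funext fun i => by
    rw [map_sub, Pi.sub_apply, ← map_koszulCross, hf', Pi.sub_apply, map_sub, he,
      Function.comp_apply, hkh.apply_apply_eq_zero, sub_zero, sub_self, Pi.zero_apply]
  obtain ⟨m, hm⟩ := exists_eq_smul_of_koszulCross_eq_zero (isWeaklyRegular_of_flat F₁ hq) hff'
  have hgm : q 0 • (u - g m) = 0 := by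
    rw [smul_sub, ← hf, ← map_smul, ← hm, Pi.sub_apply, Function.comp_apply, map_sub,
      hhg.apply_apply_eq_zero, sub_zero, sub_self]
  have hreg := (isWeaklyRegular_triple_iff_s12.1 (isWeaklyRegular_of_flat F₀ hq)).1
  exact ⟨m, (sub_eq_zero.1 (hreg _ hgm)).symm⟩

lemma smul_mem_range_of_smul_mem_range [Module.Flat R F₂] (hhg : Function.Exact h g)
    (hkh : Function.Exact k h) {t : R}
    (ht : ∀ w (e : Fin 3 → F₂), k w = ∑ i, q i • e i → ∃ v : Fin 3 → F₃, t • w = ∑ i, q i • v i)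
    {u : F₀} (hu : ∀ i, q i • u ∈ LinearMap.range g) : t • u ∈ LinearMap.range g := by
  obtain ⟨w, hl⟩ := exists_koszulLink_of_smul_mem_range hhg hkh hu
  obtain ⟨v, hv⟩ := let ⟨_, e, _, _, hw⟩ := hl; ht w e hw
  exact (hl.smul t).mem_range hq hhg hkh hv

end KoszulLink

section Colon

lemma nonempty_quotient_equiv_of_cyclic {R M : Type*} [CommRing R] [AddCommGroup M] [Module R M]
    {C N : Submodule R M} {Q : Ideal R} {d : M} (hd : d ∈ C) (hann : ∀ r : R, r • d ∈ N ↔ r ∈ Q)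
    (hgen : ∀ u ∈ C, ∃ r : R, u - r • d ∈ N) :
    Nonempty ((C ⧸ N.comap C.subtype) ≃ₗ[R] R ⧸ Q) := by
  let f : R →ₗ[R] C ⧸ N.comap C.subtype :=
    LinearMap.toSpanSingleton R _ (Submodule.Quotient.mk ⟨d, hd⟩)
  have hker : LinearMap.ker f = Q := by
    ext r
    exact (Submodule.Quotient.mk_eq_zero _ (x := r • (⟨d, hd⟩ : C))).trans (hann r)
  have hsurj : Function.Surjective f := by
    intro t
    obtain ⟨⟨u, hu⟩, rfl⟩ := Submodule.Quotient.mk_surjective _ t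
    obtain ⟨r, hr⟩ := hgen u hu
    have hr' : (⟨u, hu⟩ - r • ⟨d, hd⟩ : C) ∈ N.comap C.subtype := hr
    exact ⟨r, ((Submodule.Quotient.eq _).2 hr').symm⟩
  exact ⟨((Submodule.quotEquivOfEq _ _ hker.symm).trans (f.quotKerEquivOfSurjective hsurj)).symm⟩

lemma mem_colon_span_range_iff {R ι : Type*} [CommRing R] {J : Ideal R} {q : ι → R} {u : R} :
    u ∈ J.colon (Ideal.span (Set.range q)) ↔ ∀ i, q i • u ∈ J := by
  simp only [Ideal.colon_span, Submodule.mem_colon, Set.forall_mem_range, smul_eq_mul, mul_comm]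

lemma nonempty_colon_quotient_equiv {R F₁ F₂ : Type*} [CommRing R] [AddCommGroup F₁] [Module R F₁]
    [Module.Flat R F₁] [AddCommGroup F₂] [Module R F₂] [Module.Flat R F₂] {g : F₁ →ₗ[R] R}
    {h : F₂ →ₗ[R] F₁} {k : R →ₗ[R] F₂} {q : Fin 3 → R} (hq : IsWeaklyRegular R [q 0, q 1, q 2])
    (hhg : Function.Exact h g) (hkh : Function.Exact k h) (hk : Function.Injective k)
    {e : Fin 3 → F₂} (he : k 1 = ∑ i, q i • e i) {J : Ideal R} (hJ : LinearMap.range g = J) :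
    Nonempty ((J.colon (Ideal.span (Set.range q)) ⧸ Submodule.comap
      (J.colon (Ideal.span (Set.range q) : Set R)).subtype J) ≃ₗ[R]
        R ⧸ Ideal.span (Set.range q)) := by
  subst hJ
  obtain ⟨d, hd⟩ := exists_koszulLink_of_map_eq_sum_smul hq hhg hkh he
  have mem_span_iff (r : R) :
      r ∈ Ideal.span (Set.range q) ↔ ∃ v : Fin 3 → R, r = ∑ i, q i • v i := by
    simp only [Ideal.mem_span_range_iff_exists_fun, smul_eq_mul, mul_comm, eq_comm]
  refine nonempty_quotient_equiv_of_cyclic (d := d) ?_ (fun r => ?_) fun u hu => ?_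
  · obtain ⟨f, _, hf, -⟩ := hd
    exact mem_colon_span_range_iff.2 fun i => ⟨f i, hf i⟩
  · have hr : KoszulLink g h k q (r • d) r := by simpa only [smul_eq_mul, mul_one] using hd.smul r
    rw [mem_span_iff]
    exact ⟨hr.exists_eq_sum_smul hhg hkh hk, fun ⟨v, hv⟩ => hr.mem_range hq hhg hkh hv⟩
  · obtain ⟨w, hw⟩ := exists_koszulLink_of_smul_mem_range hhg hkh (mem_colon_span_range_iff.1 hu)
    have hr := hw.sub (hd.smul w)
    exact ⟨w, hr.mem_range hq hhg hkh (v := 0) (by simp)⟩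

end Colon

section HilbertBurch

variable {R M : Type*} [CommRing R] [AddCommGroup M] [Module R M] {ρ σ : Fin 3 → R}

lemma koszulCross_koszulCross (p q : Fin 3 → R) (f : Fin 3 → M) (i : Fin 3) :
    koszulCross p (koszulCross q f) i = q i • ∑ j, p j • f j - (p ⬝ᵥ q) • f i := by
  fin_cases i <;> simp only [koszulCross_apply, Fin.sum_univ_three, Matrix.vec3_dotProduct,
    Fin.reduceFinMk, Fin.zero_eta, Fin.mk_one, Matrix.cons_val] <;> module

lemma cross_smul_eq {f : Fin 3 → M} (hf : ∑ i, (ρ ⨯₃ σ) i • f i = 0) (i j : Fin 3) :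
    (ρ ⨯₃ σ) j • f i = σ i • koszulCross ρ f j - ρ i • koszulCross σ f j := by
  simp only [Fin.sum_univ_three, cross_apply, Matrix.cons_val] at hf
  fin_cases j <;> fin_cases i <;> simp only [koszulCross_apply, cross_apply,
    Fin.reduceFinMk, Fin.zero_eta, Fin.mk_one, Matrix.cons_val] <;>
  first | module | linear_combination (norm := module) hf

lemma exists_eq_of_sum_cross_smul_eq_zero
    (hm : IsWeaklyRegular M [(ρ ⨯₃ σ) 1, (ρ ⨯₃ σ) 2]) {f : Fin 3 → M}
    (hf : ∑ i, (ρ ⨯₃ σ) i • f i = 0) : ∃ s t : M, ∀ i, f i = ρ i • s + σ i • t := by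
  obtain ⟨h1, h2⟩ := isWeaklyRegular_pair_iff.1 hm
  have exists_eq_smul {τ : Fin 3 → R} (hτ : ρ ⨯₃ σ ⬝ᵥ τ = 0) :
      ∃ p, koszulCross τ f 1 = (ρ ⨯₃ σ) 1 • p := by
    have hcross := koszulCross_koszulCross (ρ ⨯₃ σ) τ f 0
    rw [hf, hτ, smul_zero, zero_smul, sub_self] at hcross
    exact h2 _ (koszulCross τ f 2) (sub_eq_zero.1 hcross).symm
  obtain ⟨t, ht⟩ := exists_eq_smul ((dotProduct_comm _ _).trans (dot_self_cross ρ σ))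
  obtain ⟨s, hs⟩ := exists_eq_smul ((dotProduct_comm _ _).trans (dot_cross_self ρ σ))
  refine ⟨-s, t, fun i => sub_eq_zero.1 (h1 _ ?_)⟩
  rw [smul_sub, cross_smul_eq hf i 1, hs, ht]
  module

lemma exists_eq_smul_add_smul_of_dotProduct_cross_eq_zero
    (hm : IsWeaklyRegular R [(ρ ⨯₃ σ) 1, (ρ ⨯₃ σ) 2]) {v : Fin 3 → R} (hv : v ⬝ᵥ ρ ⨯₃ σ = 0) :
    ∃ s t : R, v = s • ρ + t • σ := by
  obtain ⟨s, t, hst⟩ := exists_eq_of_sum_cross_smul_eq_zero hm ((dotProduct_comm _ _).trans hv)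
  exact ⟨s, t, funext fun i => by simp [hst, mul_comm]⟩

end HilbertBurch

section SymSq

variable {R : Type*} [CommRing R]

/-- Ternary quadratic forms: the pair `(d, e)` stands for `∑ i, d i * X i ^ 2` plus
`e 0 * X 1 * X 2 + e 1 * X 2 * X 0 + e 2 * X 0 * X 1`. -/
abbrev TernaryQuadForm (R : Type*) := (Fin 3 → R) × (Fin 3 → R)

/-- Multiplication by the linear form `v` into quadratic forms. -/
def linearFormMul (v : Fin 3 → R) : (Fin 3 → R) →ₗ[R] TernaryQuadForm R where
  toFun w := (v * w, ![v 1 * w 2 + v 2 * w 1, v 2 * w 0 + v 0 * w 2, v 0 * w 1 + v 1 * w 0])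
  map_add' w w' := by
    ext i <;> fin_cases i <;> simp <;> ring
  map_smul' r w := by
    ext i <;> fin_cases i <;> simp <;> ring

/-- Evaluation of quadratic forms at the point `m`. -/
def quadFormEval (m : Fin 3 → R) : TernaryQuadForm R →ₗ[R] R where
  toFun φ := φ.1 ⬝ᵥ m ^ 2 + φ.2 ⬝ᵥ ![m 1 * m 2, m 2 * m 0, m 0 * m 1]
  map_add' φ φ' := by simp only [Prod.fst_add, Prod.snd_add, add_dotProduct]; ring
  map_smul' r φ := by simp only [Prod.smul_fst, Prod.smul_snd, smul_dotProduct, smul_add]; rfl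

lemma linearFormMul_apply (v w : Fin 3 → R) :
    linearFormMul v w =
      (v * w, ![v 1 * w 2 + v 2 * w 1, v 2 * w 0 + v 0 * w 2, v 0 * w 1 + v 1 * w 0]) := rfl

lemma quadFormEval_apply (m : Fin 3 → R) (φ : TernaryQuadForm R) :
    quadFormEval m φ = φ.1 ⬝ᵥ m ^ 2 + φ.2 ⬝ᵥ ![m 1 * m 2, m 2 * m 0, m 0 * m 1] := rfl

lemma quadFormEval_linearFormMul (m v w : Fin 3 → R) :
    quadFormEval m (linearFormMul v w) = (v ⬝ᵥ m) * (w ⬝ᵥ m) := by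
  simp only [quadFormEval_apply, linearFormMul_apply, Matrix.vec3_dotProduct, Matrix.cons_val,
    Pi.mul_apply, Pi.pow_apply]
  ring

lemma mem_span_range_iff_dotProduct {m : Fin 3 → R} {r : R} :
    r ∈ Ideal.span (Set.range m) ↔ ∃ v : Fin 3 → R, v ⬝ᵥ m = r :=
  Ideal.mem_span_range_iff_exists_fun

lemma range_quadFormEval (m : Fin 3 → R) :
    LinearMap.range (quadFormEval m) = Ideal.span (Set.range m) ^ 2 := by
  refine le_antisymm ?_ ?_
  · rintro _ ⟨φ, rfl⟩
    have hm i j : m i * m j ∈ Ideal.span (Set.range m) ^ 2 :=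
      sq (Ideal.span (Set.range m)) ▸
        Ideal.mul_mem_mul (Ideal.subset_span ⟨i, rfl⟩) (Ideal.subset_span ⟨j, rfl⟩)
    simp only [quadFormEval_apply, Matrix.vec3_dotProduct, Matrix.cons_val, Pi.pow_apply, sq (m _)]
    exact add_mem
      (add_mem (add_mem (Ideal.mul_mem_left _ _ (hm 0 0)) (Ideal.mul_mem_left _ _ (hm 1 1)))
        (Ideal.mul_mem_left _ _ (hm 2 2)))
      (add_mem (add_mem (Ideal.mul_mem_left _ _ (hm 1 2)) (Ideal.mul_mem_left _ _ (hm 2 0)))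
        (Ideal.mul_mem_left _ _ (hm 0 1)))
  · rw [sq, Ideal.mul_le]
    intro r hr s hs
    obtain ⟨v, rfl⟩ := mem_span_range_iff_dotProduct.1 hr
    obtain ⟨w, rfl⟩ := mem_span_range_iff_dotProduct.1 hs
    exact ⟨linearFormMul v w, quadFormEval_linearFormMul m v w⟩

/-- The differential `(s, t) ↦ ρ s + σ t` from pairs of linear forms to quadratic forms in the
complex `0 → R → R³ × R³ → Sym² R³` that resolves the square of the ideal of minors of the matrix
with rows `ρ` and `σ`. -/
def symSqRel (ρ σ : Fin 3 → R) : (Fin 3 → R) × (Fin 3 → R) →ₗ[R] TernaryQuadForm R :=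
  (linearFormMul ρ).coprod (linearFormMul σ)

/-- The leftmost differential `w ↦ (w σ, -w ρ)` of the complex `0 → R → R³ × R³ → Sym² R³`. -/
def symSqSyz (ρ σ : Fin 3 → R) : R →ₗ[R] (Fin 3 → R) × (Fin 3 → R) :=
  LinearMap.toSpanSingleton R _ (σ, -ρ)

variable {ρ σ : Fin 3 → R}

lemma symSqRel_apply (s t : Fin 3 → R) :
    symSqRel ρ σ (s, t) = linearFormMul ρ s + linearFormMul σ t := rfl

lemma symSqRel_comp_symSqSyz (w : R) : symSqRel ρ σ (symSqSyz ρ σ w) = 0 := by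
  ext i <;> fin_cases i <;> simp [symSqRel, symSqSyz, linearFormMul_apply] <;> ring

lemma quadFormEval_symSqRel (st : (Fin 3 → R) × (Fin 3 → R)) :
    quadFormEval (ρ ⨯₃ σ) (symSqRel ρ σ st) = 0 := by
  rw [symSqRel_apply, map_add, quadFormEval_linearFormMul, quadFormEval_linearFormMul,
    dot_self_cross, dot_cross_self, zero_mul, zero_mul, add_zero]

section Regular

variable (hcol : IsWeaklyRegular R [ρ 0, σ 0, (ρ ⨯₃ σ) 0])
include hcol

lemma symSqSyz_injective : Function.Injective (symSqSyz ρ σ) := by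
  refine (injective_iff_map_eq_zero _).2 fun w hw => (isWeaklyRegular_triple_iff_s12.1 hcol).1 w ?_
  simpa [symSqSyz, mul_comm] using congrFun (congrArg Prod.snd hw) 0

lemma exists_of_mul_add_mul_eq_zero {s t : R} (h : ρ 0 * s + σ 0 * t = 0) :
    ∃ w, s = σ 0 * w ∧ t = -(ρ 0 * w) := by
  obtain ⟨h0, h1, -⟩ := isWeaklyRegular_triple_iff_s12.1 hcol
  obtain ⟨p, rfl⟩ := h1 t (-s) (by simp only [smul_eq_mul]; linear_combination h)
  simp only [smul_eq_mul] at h0 h ⊢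
  exact ⟨-p, by linear_combination h0 (s + σ 0 * p) (by linear_combination h), by ring⟩

lemma exists_of_mul_add_mul_eq_dotProduct_cross {s t : R} {p : Fin 3 → R}
    (hp : ρ 0 * s + σ 0 * t = p ⬝ᵥ ρ ⨯₃ σ) :
    ∃ (e f : R) (μ : Fin 3 → R),
      s = e * (ρ ⨯₃ σ) 0 + σ ⬝ᵥ μ ∧ t = f * (ρ ⨯₃ σ) 0 - ρ ⬝ᵥ μ := by
  have hm1 : (ρ ⨯₃ σ) 1 = ρ 2 * σ 0 - ρ 0 * σ 2 := rfl
  have hm2 : (ρ ⨯₃ σ) 2 = ρ 0 * σ 1 - ρ 1 * σ 0 := rfl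
  rw [Matrix.vec3_dotProduct, hm1, hm2] at hp
  obtain ⟨e, f, hef⟩ := (isWeaklyRegular_triple_iff_s12.1 hcol).2.2 (p 0)
    (s + p 1 * σ 2 - p 2 * σ 1) (t - p 1 * ρ 2 + p 2 * ρ 1)
    (by simp only [smul_eq_mul]; linear_combination -hp)
  simp only [smul_eq_mul] at hef
  obtain ⟨n, hs, ht⟩ := exists_of_mul_add_mul_eq_zero hcol
    (s := s - e * (ρ ⨯₃ σ) 0 + p 1 * σ 2 - p 2 * σ 1)
    (t := t - f * (ρ ⨯₃ σ) 0 - p 1 * ρ 2 + p 2 * ρ 1)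
    (by linear_combination hp + (ρ ⨯₃ σ) 0 * hef)
  refine ⟨e, f, ![n, p 2, -p 1], ?_, ?_⟩ <;>
    simp only [Matrix.vec3_dotProduct, Matrix.cons_val]
  · linear_combination hs
  · linear_combination ht

variable (hm : IsWeaklyRegular R [(ρ ⨯₃ σ) 1, (ρ ⨯₃ σ) 2])
include hm

lemma exact_symSqRel_quadFormEval :
    Function.Exact (symSqRel ρ σ) (quadFormEval (ρ ⨯₃ σ)) := by
  intro φ
  refine ⟨fun h => ?_, fun ⟨st, h⟩ => h ▸ quadFormEval_symSqRel st⟩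
  let Φ : Fin 3 → Fin 3 → R := ![![φ.1 0, φ.2 2, φ.2 1], ![0, φ.1 1, φ.2 0], ![0, 0, φ.1 2]]
  obtain ⟨s, t, hst⟩ := exists_eq_smul_add_smul_of_dotProduct_cross_eq_zero hm
    (v := fun i => Φ i ⬝ᵥ ρ ⨯₃ σ) (by
      rw [← h, quadFormEval_apply]
      simp only [Φ, Matrix.vec3_dotProduct, Matrix.cons_val, Pi.pow_apply]
      ring)
  obtain ⟨e, f, μ, rfl, rfl⟩ := exists_of_mul_add_mul_eq_dotProduct_cross hcol (s := s) (t := t)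
    (p := Φ 0) (by rw [mul_comm, mul_comm (σ 0)]; exact (congrFun hst 0).symm)
  -- With `m = ρ × σ` this choice of `e`, `f` and `μ` gives `Φ m = e m₀ ρ + f m₀ σ + μ × m`. The
  -- matrix `N` of `μ × ·` is antisymmetric, so its quadratic form vanishes.
  let N : Fin 3 → Fin 3 → R := ![![0, -μ 2, μ 1], ![μ 2, 0, -μ 0], ![-μ 1, μ 0, 0]]
  have hN (i) : (Φ i - (ρ i • ![e, 0, 0] + σ i • ![f, 0, 0] + N i)) ⬝ᵥ ρ ⨯₃ σ = 0 := by
    rw [sub_dotProduct, congrFun hst i]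
    fin_cases i <;> simp only [N, Pi.add_apply, Pi.smul_apply, smul_eq_mul,
      Matrix.vec3_dotProduct, cross_apply, Fin.zero_eta, Fin.mk_one, Fin.reduceFinMk,
      Matrix.cons_val] <;> ring
  choose a b hab using fun i => exists_eq_smul_add_smul_of_dotProduct_cross_eq_zero hm (hN i)
  have hΦ i j : Φ i j =
      ρ i * ![e, 0, 0] j + σ i * ![f, 0, 0] j + N i j + a i * ρ j + b i * σ j := by
    have := congrFun (hab i) j
    simp only [Pi.sub_apply, Pi.add_apply, Pi.smul_apply, smul_eq_mul] at this
    linear_combination this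
  have hφ : φ = (fun i => Φ i i, ![Φ 1 2 + Φ 2 1, Φ 2 0 + Φ 0 2, Φ 0 1 + Φ 1 0]) := by
    ext i <;> fin_cases i <;> simp [Φ]
  rw [hφ]
  refine ⟨(![e, 0, 0] + a, ![f, 0, 0] + b), Prod.ext (funext fun i => ?_) (funext fun i => ?_)⟩ <;>
    fin_cases i <;> simp only [hΦ, N, symSqRel_apply, linearFormMul_apply, Prod.mk_add_mk,
      Pi.add_apply, Pi.mul_apply, Fin.zero_eta, Fin.mk_one, Fin.reduceFinMk, Matrix.cons_val] <;>
    ring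

lemma exact_symSqSyz_symSqRel : Function.Exact (symSqSyz ρ σ) (symSqRel ρ σ) := by
  rintro ⟨s, t⟩
  refine ⟨fun h => ?_, fun ⟨w, h⟩ => h ▸ symSqRel_comp_symSqSyz w⟩
  rw [symSqRel_apply] at h
  have hm1 : ∀ r, (ρ 2 * σ 0 - ρ 0 * σ 2) * r = 0 → r = 0 := (isWeaklyRegular_pair_iff.1 hm).1
  have h00 : ρ 0 * s 0 + σ 0 * t 0 = 0 := congrFun (congrArg Prod.fst h) 0
  have h22 : ρ 2 * s 2 + σ 2 * t 2 = 0 := congrFun (congrArg Prod.fst h) 2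
  have h12 : ρ 1 * s 2 + ρ 2 * s 1 + (σ 1 * t 2 + σ 2 * t 1) = 0 :=
    congrFun (congrArg Prod.snd h) 0
  have h20 : ρ 2 * s 0 + ρ 0 * s 2 + (σ 2 * t 0 + σ 0 * t 2) = 0 :=
    congrFun (congrArg Prod.snd h) 1
  have h01 : ρ 0 * s 1 + ρ 1 * s 0 + (σ 0 * t 1 + σ 1 * t 0) = 0 :=
    congrFun (congrArg Prod.snd h) 2
  obtain ⟨w, hs0, ht0⟩ := exists_of_mul_add_mul_eq_zero hcol h00
  obtain ⟨w1, hs1, ht1⟩ := exists_of_mul_add_mul_eq_zero hcol (s := s 1 - σ 1 * w)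
    (t := t 1 + ρ 1 * w) (by rw [hs0, ht0] at h01; linear_combination h01)
  obtain ⟨w2, hs2, ht2⟩ := exists_of_mul_add_mul_eq_zero hcol (s := s 2 - σ 2 * w)
    (t := t 2 + ρ 2 * w) (by rw [hs0, ht0] at h20; linear_combination h20)
  have hw2 : w2 = 0 := hm1 w2 (by linear_combination h22 - ρ 2 * hs2 - σ 2 * ht2)
  subst hw2
  have hw1 : w1 = 0 := hm1 w1 (by
    linear_combination h12 - ρ 2 * hs1 - ρ 1 * hs2 - σ 1 * ht2 - σ 2 * ht1)
  subst hw1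
  refine ⟨w, Prod.ext (funext fun i => ?_) (funext fun i => ?_)⟩ <;> fin_cases i <;>
    simp only [symSqSyz, LinearMap.toSpanSingleton_apply, Prod.smul_mk, Pi.smul_apply,
      Pi.neg_apply, smul_eq_mul, Fin.reduceFinMk, Fin.zero_eta, Fin.mk_one]
  · linear_combination -hs0
  · linear_combination -hs1
  · linear_combination -hs2
  · linear_combination -ht0
  · linear_combination -ht1
  · linear_combination -ht2

end Regular

end SymSq

section MinorIdeal

variable {R : Type*} [CommRing R] {ρ σ : Fin 3 → R}

lemma mem_span_range_cross_of_mul_mem {z : R}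
    (hz : IsWeaklyRegular R [z, (ρ ⨯₃ σ) 1, (ρ ⨯₃ σ) 2]) {r : R}
    (hr : z * r ∈ Ideal.span (Set.range (ρ ⨯₃ σ))) : r ∈ Ideal.span (Set.range (ρ ⨯₃ σ)) := by
  obtain ⟨hz0, hzm⟩ := (isWeaklyRegular_cons_iff _ _ _).1 hz
  obtain ⟨v, hv⟩ := mem_span_range_iff_dotProduct.1 hr
  let π : R →ₗ[R] QuotSMulTop z R := Submodule.mkQ _
  have eq_mul_of_map_eq_zero {t : R} (ht : π t = 0) : ∃ u, z * u = t :=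
    (Submodule.mem_smul_pointwise_iff_exists _ _ _).1 ((Submodule.Quotient.mk_eq_zero _).1 ht)
      |>.imp fun _ h => h.2
  obtain ⟨s, t, hst⟩ := exists_eq_of_sum_cross_smul_eq_zero hzm (f := π ∘ v) (by
    have : ∑ i, (ρ ⨯₃ σ) i • π (v i) = π (z • r) := by
      simp only [← map_smul, ← map_sum, ← hv, smul_eq_mul, dotProduct, mul_comm]
    refine this.trans ((Submodule.Quotient.mk_eq_zero _).2 ?_)
    exact Submodule.smul_mem_pointwise_smul _ _ _ trivial)
  obtain ⟨s, rfl⟩ := Submodule.mkQ_surjective _ s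
  obtain ⟨t, rfl⟩ := Submodule.mkQ_surjective _ t
  choose u hu using fun i => eq_mul_of_map_eq_zero (t := v i - (ρ i • s + σ i • t)) (by
    rw [map_sub, map_add, map_smul, map_smul]
    exact sub_eq_zero.2 (hst i))
  have hv' : v = z • u + s • ρ + t • σ := funext fun i => by
    simp only [Pi.add_apply, Pi.smul_apply, smul_eq_mul, hu]
    ring
  refine mem_span_range_iff_dotProduct.2 ⟨u, hz0 ?_⟩
  change z * (u ⬝ᵥ ρ ⨯₃ σ) = z * r
  rw [← hv, hv']
  simp only [add_dotProduct, smul_dotProduct, dot_self_cross, dot_cross_self, smul_eq_mul,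
    mul_zero, add_zero]

variable (hcol : IsWeaklyRegular R [ρ 0, σ 0, (ρ ⨯₃ σ) 0])
  (hm : IsWeaklyRegular R [(ρ ⨯₃ σ) 1, (ρ ⨯₃ σ) 2])
  {q : Fin 3 → R} (hq : IsWeaklyRegular R [q 0, q 1, q 2])
include hcol hm hq

lemma entries_mul_mem_span_range_cross_sq {u : R}
    (hu : ∀ i, q i * u ∈ Ideal.span (Set.range (ρ ⨯₃ σ)) ^ 2) (i : Fin 3) :
    ρ i * u ∈ Ideal.span (Set.range (ρ ⨯₃ σ)) ^ 2 ∧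
      σ i * u ∈ Ideal.span (Set.range (ρ ⨯₃ σ)) ^ 2 := by
  simp only [← range_quadFormEval] at hu ⊢
  have mul_mem {t : R} := smul_mem_range_of_smul_mem_range (t := t) (u := u) hq
    (exact_symSqRel_quadFormEval hcol hm) (exact_symSqSyz_symSqRel hcol hm)
  have hk (w : R) (e : Fin 3 → (Fin 3 → R) × (Fin 3 → R))
      (he : symSqSyz ρ σ w = ∑ j, q j • e j) :
      σ i • w = ∑ j, q j • (e j).1 i ∧ ρ i • w = ∑ j, q j • -(e j).2 i := by
    have hσ := congrFun (congrArg Prod.fst he) i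
    have hρ := congrFun (congrArg Prod.snd he) i
    simp only [symSqSyz, LinearMap.toSpanSingleton_apply, Prod.fst_sum, Prod.snd_sum,
      Finset.sum_apply, Prod.smul_fst, Prod.smul_snd, Pi.smul_apply, Pi.neg_apply,
      smul_eq_mul] at hσ hρ ⊢
    constructor
    · rw [mul_comm, hσ]
    · simp only [mul_neg, Finset.sum_neg_distrib, ← hρ]
      ring
  exact ⟨mul_mem (fun w e he => ⟨_, (hk w e he).2⟩) hu,
    mul_mem (fun w e he => ⟨_, (hk w e he).1⟩) hu⟩

lemma nonempty_colon_span_range_cross_sq_quotient_equiv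
    (hentries : Ideal.span (Set.range ρ ∪ Set.range σ) ≤ Ideal.span (Set.range q)) :
    Nonempty (((Ideal.span (Set.range (ρ ⨯₃ σ)) ^ 2).colon (Ideal.span (Set.range q)) ⧸
      Submodule.comap
        ((Ideal.span (Set.range (ρ ⨯₃ σ)) ^ 2).colon (Ideal.span (Set.range q) : Set R)).subtype
        (Ideal.span (Set.range (ρ ⨯₃ σ)) ^ 2)) ≃ₗ[R] R ⧸ Ideal.span (Set.range q)) := by
  choose c hc using fun i => mem_span_range_iff_dotProduct.1
    (hentries (Ideal.subset_span (.inl ⟨i, rfl⟩)))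
  choose d hd using fun i => mem_span_range_iff_dotProduct.1
    (hentries (Ideal.subset_span (.inr ⟨i, rfl⟩)))
  refine nonempty_colon_quotient_equiv hq (exact_symSqRel_quadFormEval hcol hm)
    (exact_symSqSyz_symSqRel hcol hm) (symSqSyz_injective hcol)
    (e := fun j => (fun i => d i j, fun i => -c i j)) ?_ (range_quadFormEval _)
  ext i <;> simp [symSqSyz, ← hc, ← hd, dotProduct, Prod.fst_sum, Prod.snd_sum, mul_comm]

end MinorIdeal

section SymbolicPower

variable {R : Type*} [CommRing R] {I : Ideal R} {n : ℕ} {r z : R}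

lemma mem_symbolicPower_iff :
    r ∈ symbolicPower I n ↔ ∀ p ∈ I.minimalPrimes, ∃ s ∉ p, s * r ∈ I ^ n := by
  simp only [symbolicPower, Ideal.mem_iInf, Subtype.forall, Ideal.mem_comap]
  refine forall₂_congr fun p hp => ?_
  have : p.IsPrime := hp.1.1
  exact IsLocalization.algebraMap_mem_map_algebraMap_iff p.primeCompl _ _ _

lemma mem_minimalPrimes_of_ne_maximalIdeal [IsNoetherianRing R] [IsLocalRing R]
    (hz : (Ideal.span (insert z (I : Set R))).radical = maximalIdeal R) {P : Ideal R} [P.IsPrime]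
    (hIP : I ≤ P) (hP : P ≠ maximalIdeal R) : P ∈ I.minimalPrimes := by
  have hlt : P < maximalIdeal R := lt_of_le_of_ne (le_maximalIdeal (Ideal.IsPrime.ne_top ‹_›)) hP
  have hmin : maximalIdeal R ∈ (Ideal.span (insert z (I : Set R))).minimalPrimes := by
    rw [← Ideal.radical_minimalPrimes, hz, Ideal.minimalPrimes_eq_subsingleton_self]
    exact Set.mem_singleton _
  have := Ideal.mem_minimalPrimes_span_of_mem_minimalPrimes_span_insert hlt z I hmin I hIP
    fun r hr => Ideal.le_radical (Ideal.subset_span (Set.mem_insert_of_mem _ hr))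
  rwa [Ideal.span_eq] at this

lemma mem_symbolicPower_iff_maximalIdeal_le_radical_colon [IsNoetherianRing R] [IsLocalRing R]
    (hz : (Ideal.span (insert z (I : Set R))).radical = maximalIdeal R)
    (hreg : ∀ s, z * s ∈ I → s ∈ I) :
    r ∈ symbolicPower I n ↔ maximalIdeal R ≤ ((I ^ n).colon {r}).radical := by
  rw [mem_symbolicPower_iff]
  refine ⟨fun h => ?_, fun h p hp => ?_⟩
  · rw [Ideal.radical_eq_sInf]
    refine le_sInf fun P ⟨hcP, hP⟩ => ?_
    by_contra hne
    have hIP : I ≤ P := hP.le_of_pow_le (n := n) ((Ideal.le_colon).trans hcP)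
    obtain ⟨s, hsP, hs⟩ := h P (mem_minimalPrimes_of_ne_maximalIdeal hz hIP fun h => hne h.ge)
    exact hsP (hcP (Submodule.mem_colon_singleton.2 hs))
  · have hzm : z ∈ maximalIdeal R :=
      hz ▸ Ideal.le_radical (Ideal.subset_span (Set.mem_insert _ _))
    have hzp : z ∉ p := fun hzp =>
      let ⟨s, hs, hzs⟩ := Ideal.exists_mul_mem_of_mem_minimalPrimes hp hzp
      hs (hreg s hzs)
    obtain ⟨k, hk⟩ := h hzm
    exact ⟨z ^ k, fun h => hzp (hp.1.1.mem_of_pow_mem k h), Submodule.mem_colon_singleton.1 hk⟩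

end SymbolicPower

lemma isWeaklyRegular_pair_of_isRegular_triple {R : Type*} [CommRing R] [IsNoetherianRing R]
    [IsLocalRing R] {u v w : R} (h : IsRegular R [u, v, w]) : IsWeaklyRegular R [v, w] :=
  ((isWeaklyRegular_append_iff R [v, w] [u]).1
    (IsLocalRing.isRegular_of_perm h (List.perm_append_comm (l₁ := [u]))).toIsWeaklyRegular).1

lemma symbolicPower_span_range_cross_two_eq_colon {R : Type*} [CommRing R] [IsNoetherianRing R]
    [IsLocalRing R] {ρ σ : Fin 3 → R} {z : R}
    (hcol : IsWeaklyRegular R [ρ 0, σ 0, (ρ ⨯₃ σ) 0])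
    (hz : IsRegular R [z, (ρ ⨯₃ σ) 1, (ρ ⨯₃ σ) 2])
    (hrad : (Ideal.span (insert z (Ideal.span (Set.range (ρ ⨯₃ σ)) : Set R))).radical =
      maximalIdeal R)
    (hdepth : ∀ J : Ideal R, maximalIdeal R ≤ J.radical →
      ∃ q : Fin 3 → R, IsWeaklyRegular R [q 0, q 1, q 2] ∧ ∀ i, q i ∈ J)
    (hentries : maximalIdeal R ≤ (Ideal.span (Set.range ρ ∪ Set.range σ)).radical) :
    symbolicPower (Ideal.span (Set.range (ρ ⨯₃ σ))) 2 =
      (Ideal.span (Set.range (ρ ⨯₃ σ)) ^ 2).colon (Ideal.span (Set.range ρ ∪ Set.range σ)) := by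
  ext r
  rw [mem_symbolicPower_iff_maximalIdeal_le_radical_colon hrad
    fun _ => mem_span_range_cross_of_mul_mem hz.toIsWeaklyRegular]
  refine ⟨fun h => ?_, fun h => hentries.trans (Ideal.radical_mono fun t ht => ?_)⟩
  · obtain ⟨q, hq, hqr⟩ := hdepth _ h
    have hr := entries_mul_mem_span_range_cross_sq hcol
      (isWeaklyRegular_pair_of_isRegular_triple hz) hq
      fun i => Submodule.mem_colon_singleton.1 (hqr i)
    rw [Ideal.colon_span, Submodule.mem_colon]
    rintro _ (⟨i, rfl⟩ | ⟨i, rfl⟩)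
    · simpa only [smul_eq_mul, mul_comm] using (hr i).1
    · simpa only [smul_eq_mul, mul_comm] using (hr i).2
  · rw [Submodule.mem_colon_singleton, smul_eq_mul, mul_comm]
    exact Submodule.mem_colon.1 h t ht

section CohenMacaulay

lemma mem_radical_of_pow_sub_mem {R : Type*} [CommRing R] {J : Ideal R} {s t : R} {n : ℕ}
    (hst : s ^ n - t ∈ J.radical) (ht : t ∈ J.radical) : s ∈ J.radical :=
  J.radical_isRadical ⟨n, sub_add_cancel (s ^ n) t ▸ add_mem hst ht⟩

variable {R : Type*} [CommRing R] [IsLocalRing R] {x y z : R}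
  (hsop : (Ideal.span {x, y, z}).radical = maximalIdeal R)
include hsop

lemma mem_maximalIdeal_of_radical_span_triple_eq :
    x ∈ maximalIdeal R ∧ y ∈ maximalIdeal R ∧ z ∈ maximalIdeal R :=
  hsop ▸ ⟨Ideal.le_radical (Ideal.subset_span (by simp)),
    Ideal.le_radical (Ideal.subset_span (by simp)), Ideal.le_radical (Ideal.subset_span (by simp))⟩

lemma maximalIdeal_le_radical {J : Ideal R} (hx : x ∈ J.radical) (hy : y ∈ J.radical)
    (hz : z ∈ J.radical) : maximalIdeal R ≤ J.radical := by
  rw [← hsop, J.radical_isRadical.radical_le_iff, Ideal.span_le]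
  rintro _ (rfl | rfl | rfl) <;> assumption

variable (hCM : ∀ u v w : R, (Ideal.span {u, v, w}).radical = maximalIdeal R →
  IsRegular R [u, v, w])
include hCM

lemma isRegular_of_mem_radical {u v w : R} (hu : u ∈ maximalIdeal R)
    (hv : v ∈ maximalIdeal R) (hw : w ∈ maximalIdeal R)
    (hx : x ∈ (Ideal.span {u, v, w}).radical) (hy : y ∈ (Ideal.span {u, v, w}).radical)
    (hz : z ∈ (Ideal.span {u, v, w}).radical) : IsRegular R [u, v, w] := by
  refine hCM u v w (le_antisymm ?_ (maximalIdeal_le_radical hsop hx hy hz))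
  rw [(maximalIdeal.isMaximal R).isPrime.radical_le_iff, Ideal.span_le]
  rintro _ (rfl | rfl | rfl) <;> assumption

lemma isRegular_pow_triple {i j k : ℕ} (hi : 0 < i) (hj : 0 < j) (hk : 0 < k) :
    IsRegular R [x ^ i, y ^ j, z ^ k] := by
  obtain ⟨hx, hy, hz⟩ := mem_maximalIdeal_of_radical_span_triple_eq hsop
  exact isRegular_of_mem_radical hsop hCM (Ideal.pow_mem_of_mem _ hx _ hi)
    (Ideal.pow_mem_of_mem _ hy _ hj) (Ideal.pow_mem_of_mem _ hz _ hk)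
    ⟨i, Ideal.subset_span (by simp)⟩ ⟨j, Ideal.subset_span (by simp)⟩
    ⟨k, Ideal.subset_span (by simp)⟩

lemma exists_isWeaklyRegular_of_maximalIdeal_le_radical {J : Ideal R}
    (hJ : maximalIdeal R ≤ J.radical) :
    ∃ q : Fin 3 → R, IsWeaklyRegular R [q 0, q 1, q 2] ∧ ∀ i, q i ∈ J := by
  obtain ⟨hx, hy, hz⟩ := mem_maximalIdeal_of_radical_span_triple_eq hsop
  obtain ⟨i, hi⟩ := hJ hx
  obtain ⟨j, hj⟩ := hJ hy
  obtain ⟨k, hk⟩ := hJ hz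
  refine ⟨![x ^ (i + 1), y ^ (j + 1), z ^ (k + 1)],
    (isRegular_pow_triple hsop hCM i.succ_pos j.succ_pos k.succ_pos).toIsWeaklyRegular, fun l => ?_⟩
  fin_cases l
  · exact J.pow_mem_of_pow_mem hi i.le_succ
  · exact J.pow_mem_of_pow_mem hj j.le_succ
  · exact J.pow_mem_of_pow_mem hk k.le_succ

end CohenMacaulay

section MonomialMatrix

lemma span_range_union_range_monomials {R : Type*} [CommRing R] (x y z : R)
    (α β γ α' β' γ' : ℕ) :
    Ideal.span (Set.range ![y ^ β', z ^ γ', x ^ α'] ∪ Set.range ![x ^ α, y ^ β, z ^ γ]) =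
      Ideal.span (Set.range ![x ^ min α α', y ^ min β β', z ^ min γ γ']) := by
  refine le_antisymm (Ideal.span_le.2 ?_) (Ideal.span_le.2 ?_)
  · have hx {n} (h : min α α' ≤ n) : x ^ n ∈ Ideal.span
        (Set.range ![x ^ min α α', y ^ min β β', z ^ min γ γ']) :=
      Ideal.pow_mem_of_pow_mem _ (Ideal.subset_span ⟨0, rfl⟩) h
    have hy {n} (h : min β β' ≤ n) : y ^ n ∈ Ideal.span
        (Set.range ![x ^ min α α', y ^ min β β', z ^ min γ γ']) :=
      Ideal.pow_mem_of_pow_mem _ (Ideal.subset_span ⟨1, rfl⟩) h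
    have hz {n} (h : min γ γ' ≤ n) : z ^ n ∈ Ideal.span
        (Set.range ![x ^ min α α', y ^ min β β', z ^ min γ γ']) :=
      Ideal.pow_mem_of_pow_mem _ (Ideal.subset_span ⟨2, rfl⟩) h
    rintro _ (⟨i, rfl⟩ | ⟨i, rfl⟩) <;> fin_cases i
    · exact hy (min_le_right _ _)
    · exact hz (min_le_right _ _)
    · exact hx (min_le_right _ _)
    · exact hx (min_le_left _ _)
    · exact hy (min_le_left _ _)
    · exact hz (min_le_left _ _)
  · rintro _ ⟨i, rfl⟩
    refine Ideal.subset_span ?_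
    fin_cases i <;> simp only [Fin.zero_eta, Fin.mk_one, Fin.reduceFinMk, Matrix.cons_val]
    · rcases min_choice α α' with h | h <;> rw [h]
      exacts [.inr ⟨0, rfl⟩, .inl ⟨2, rfl⟩]
    · rcases min_choice β β' with h | h <;> rw [h]
      exacts [.inr ⟨1, rfl⟩, .inl ⟨0, rfl⟩]
    · rcases min_choice γ γ' with h | h <;> rw [h]
      exacts [.inr ⟨2, rfl⟩, .inl ⟨1, rfl⟩]

lemma range_vecCons_triple {X : Type*} (u v w : X) : Set.range ![u, v, w] = {u, v, w} := by
  rw [Matrix.range_cons, Matrix.range_cons_cons_empty]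
  rfl

lemma cross_monomials_eq {R : Type*} [CommRing R] (x y z : R) (α β γ α' β' γ' : ℕ) :
    ![y ^ β', z ^ γ', x ^ α'] ⨯₃ ![x ^ α, y ^ β, z ^ γ] =
      ![z ^ (γ + γ') - x ^ α' * y ^ β, x ^ (α + α') - y ^ β' * z ^ γ,
        y ^ (β + β') - x ^ α * z ^ γ'] := by
  ext i; fin_cases i <;> simp [cross_apply] <;> ring

lemma mem_radical_of_minors_mem_radical {R : Type*} [CommRing R] {x y z : R}
    {α β γ α' β' γ' : ℕ} (hγ : 0 < γ) (hγ' : 0 < γ') {J : Ideal R} (hz : z ∈ J.radical)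
    (hb : x ^ (α + α') - y ^ β' * z ^ γ ∈ J.radical)
    (hc : y ^ (β + β') - x ^ α * z ^ γ' ∈ J.radical) : x ∈ J.radical ∧ y ∈ J.radical :=
  ⟨mem_radical_of_pow_sub_mem hb (Ideal.mul_mem_left _ _ (Ideal.pow_mem_of_mem _ hz _ hγ)),
    mem_radical_of_pow_sub_mem hc (Ideal.mul_mem_left _ _ (Ideal.pow_mem_of_mem _ hz _ hγ'))⟩

variable {R : Type*} [CommRing R] [IsLocalRing R] {x y z : R}
  (hsop : (Ideal.span {x, y, z}).radical = maximalIdeal R)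
  {α β γ α' β' γ' : ℕ}
include hsop

lemma minors_mem_maximalIdeal (hα : 0 < α) (hβ : 0 < β) (hγ : 0 < γ) (hγ' : 0 < γ') :
    z ^ (γ + γ') - x ^ α' * y ^ β ∈ maximalIdeal R ∧
      x ^ (α + α') - y ^ β' * z ^ γ ∈ maximalIdeal R ∧
        y ^ (β + β') - x ^ α * z ^ γ' ∈ maximalIdeal R := by
  obtain ⟨hx, hy, hz⟩ := mem_maximalIdeal_of_radical_span_triple_eq hsop
  have pow_mem {t : R} (ht : t ∈ maximalIdeal R) {n : ℕ} (hn : 0 < n) : t ^ n ∈ maximalIdeal R :=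
    Ideal.pow_mem_of_mem _ ht _ hn
  exact ⟨sub_mem (pow_mem hz (by lia)) (Ideal.mul_mem_left _ _ (pow_mem hy hβ)),
    sub_mem (pow_mem hx (by lia)) (Ideal.mul_mem_left _ _ (pow_mem hz hγ)),
    sub_mem (pow_mem hy (by lia)) (Ideal.mul_mem_left _ _ (pow_mem hz hγ'))⟩

lemma radical_span_insert_minors_eq_maximalIdeal (hα : 0 < α) (hβ : 0 < β) (hγ : 0 < γ)
    (hγ' : 0 < γ') :
    (Ideal.span (insert z (Ideal.span {z ^ (γ + γ') - x ^ α' * y ^ β,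
      x ^ (α + α') - y ^ β' * z ^ γ, y ^ (β + β') - x ^ α * z ^ γ'} : Set R))).radical =
      maximalIdeal R := by
  obtain ⟨ha, hb, hc⟩ := minors_mem_maximalIdeal hsop (α' := α') (β' := β') hα hβ hγ hγ'
  obtain ⟨-, -, hz⟩ := mem_maximalIdeal_of_radical_span_triple_eq hsop
  refine le_antisymm ?_ ?_
  · rw [(maximalIdeal.isMaximal R).isPrime.radical_le_iff, Ideal.span_le, Set.insert_subset_iff,
      SetLike.coe_subset_coe, Ideal.span_le]
    refine ⟨hz, ?_⟩
    rintro _ (rfl | rfl | rfl) <;> assumption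
  · have hzJ := Ideal.le_radical (Ideal.subset_span (Set.mem_insert z (Ideal.span
      {z ^ (γ + γ') - x ^ α' * y ^ β, x ^ (α + α') - y ^ β' * z ^ γ,
        y ^ (β + β') - x ^ α * z ^ γ'} : Set R)))
    obtain ⟨hxJ, hyJ⟩ := mem_radical_of_minors_mem_radical hγ hγ' hzJ
      (Ideal.le_radical (Ideal.subset_span (.inr (Ideal.subset_span (.inr (.inl rfl))))))
      (Ideal.le_radical (Ideal.subset_span (.inr (Ideal.subset_span (.inr (.inr rfl))))))
    exact maximalIdeal_le_radical hsop hxJ hyJ hzJ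

variable (hCM : ∀ u v w : R, (Ideal.span {u, v, w}).radical = maximalIdeal R →
  IsRegular R [u, v, w])
include hCM

lemma isRegular_column_minor (hα : 0 < α) (hβ : 0 < β) (hγ : 0 < γ) (hβ' : 0 < β')
    (hγ' : 0 < γ') : IsRegular R [y ^ β', x ^ α, z ^ (γ + γ') - x ^ α' * y ^ β] := by
  obtain ⟨hx, hy, -⟩ := mem_maximalIdeal_of_radical_span_triple_eq hsop
  obtain ⟨ha, -, -⟩ := minors_mem_maximalIdeal hsop (α' := α') (β' := β') hα hβ hγ hγ'
  let J := Ideal.span {y ^ β', x ^ α, z ^ (γ + γ') - x ^ α' * y ^ β}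
  have hxJ : x ∈ J.radical := ⟨α, Ideal.subset_span (.inr (.inl rfl))⟩
  have hyJ : y ∈ J.radical := ⟨β', Ideal.subset_span (.inl rfl)⟩
  have hzJ : z ∈ J.radical := mem_radical_of_pow_sub_mem
    (Ideal.le_radical (Ideal.subset_span (.inr (.inr rfl))))
    (Ideal.mul_mem_left _ _ (Ideal.pow_mem_of_mem _ hyJ _ hβ))
  exact isRegular_of_mem_radical hsop hCM (Ideal.pow_mem_of_mem _ hy _ hβ')
    (Ideal.pow_mem_of_mem _ hx _ hα) ha hxJ hyJ hzJ

lemma isRegular_cons_minors (hα : 0 < α) (hβ : 0 < β) (hγ : 0 < γ) (hγ' : 0 < γ') :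
    IsRegular R [z, x ^ (α + α') - y ^ β' * z ^ γ, y ^ (β + β') - x ^ α * z ^ γ'] := by
  obtain ⟨-, hb, hc⟩ := minors_mem_maximalIdeal hsop (α' := α') (β' := β') hα hβ hγ hγ'
  obtain ⟨-, -, hz⟩ := mem_maximalIdeal_of_radical_span_triple_eq hsop
  let J := Ideal.span {z, x ^ (α + α') - y ^ β' * z ^ γ, y ^ (β + β') - x ^ α * z ^ γ'}
  have hzJ : z ∈ J.radical := Ideal.le_radical (Ideal.subset_span (.inl rfl))
  obtain ⟨hxJ, hyJ⟩ := mem_radical_of_minors_mem_radical hγ hγ' hzJ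
    (Ideal.le_radical (Ideal.subset_span (.inr (.inl rfl))))
    (Ideal.le_radical (Ideal.subset_span (.inr (.inr rfl))))
  exact isRegular_of_mem_radical hsop hCM hz hb hc hxJ hyJ hzJ

end MonomialMatrix

/-- With `Q = (x^{min(α,α')}, y^{min(β,β')}, z^{min(γ,γ')})`, one has
`I⁽²⁾ = I² :_R Q` and `I⁽²⁾/I² ≅ R/Q`. -/
theorem second_symbolic_power
    {R : Type*} [CommRing R] [IsNoetherianRing R] [IsLocalRing R]
    (hdim : ringKrullDim R = 3)
    (hCM : ∀ u v w : R, (Ideal.span {u, v, w}).radical = maximalIdeal R →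
      RingTheory.Sequence.IsRegular R [u, v, w])
    (x y z : R) (hsop : (Ideal.span {x, y, z}).radical = maximalIdeal R)
    (α β γ α' β' γ' : ℕ)
    (hα : 0 < α) (hβ : 0 < β) (hγ : 0 < γ)
    (hα' : 0 < α') (hβ' : 0 < β') (hγ' : 0 < γ')
    (a b c : R)
    (ha : a = z ^ (γ + γ') - x ^ α' * y ^ β)
    (hb : b = x ^ (α + α') - y ^ β' * z ^ γ)
    (hc : c = y ^ (β + β') - x ^ α * z ^ γ')
    (I : Ideal R) (hI : I = Ideal.span {a, b, c})
    (Q : Ideal R)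
    (hQ : Q = Ideal.span {x ^ min α α', y ^ min β β', z ^ min γ γ'}) :
    symbolicPower I 2 = Submodule.colon ((I ^ 2 : Ideal R) : Submodule R R) (Q : Submodule R R) ∧
      Nonempty
        ((↥(Submodule.colon ((I ^ 2 : Ideal R) : Submodule R R) (Q : Submodule R R)) ⧸
            Submodule.comap
              (Submodule.colon ((I ^ 2 : Ideal R) : Submodule R R) (Q : Submodule R R)).subtype
              ((I ^ 2 : Ideal R) : Submodule R R))
          ≃ₗ[R] (R ⧸ Q)) := by
  let ρ : Fin 3 → R := ![y ^ β', z ^ γ', x ^ α']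
  let σ : Fin 3 → R := ![x ^ α, y ^ β, z ^ γ]
  have hcross : ρ ⨯₃ σ = ![a, b, c] := by rw [ha, hb, hc]; exact cross_monomials_eq ..
  have hcol : IsWeaklyRegular R [ρ 0, σ 0, (ρ ⨯₃ σ) 0] := by
    rw [hcross, Matrix.cons_val_zero, ha]
    exact (isRegular_column_minor hsop hCM hα hβ hγ hβ' hγ').toIsWeaklyRegular
  have hz : IsRegular R [z, (ρ ⨯₃ σ) 1, (ρ ⨯₃ σ) 2] := by
    rw [hcross, hb, hc]
    exact isRegular_cons_minors hsop hCM hα hβ hγ hγ'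
  have hrad : (Ideal.span (insert z (Ideal.span (Set.range (ρ ⨯₃ σ)) : Set R))).radical =
      maximalIdeal R := by
    rw [hcross, range_vecCons_triple, ha, hb, hc]
    exact radical_span_insert_minors_eq_maximalIdeal hsop hα hβ hγ hγ'
  have hq := isRegular_pow_triple hsop hCM (lt_min hα hα') (lt_min hβ hβ') (lt_min hγ hγ')
  have hentries := span_range_union_range_monomials x y z α β γ α' β' γ'
  rw [← range_vecCons_triple] at hI hQ
  rw [hI, hQ, ← hcross]
  refine ⟨?_, nonempty_colon_span_range_cross_sq_quotient_equiv hcol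
    (isWeaklyRegular_pair_of_isRegular_triple hz) hq.toIsWeaklyRegular hentries.le⟩
  rw [← hentries]
  exact symbolicPower_span_range_cross_two_eq_colon hcol hz hrad
    (fun _ => exists_isWeaklyRegular_of_maximalIdeal_le_radical hsop hCM)
    (maximalIdeal_le_radical hsop ⟨α, Ideal.subset_span (.inr ⟨0, rfl⟩)⟩
      ⟨β, Ideal.subset_span (.inr ⟨1, rfl⟩)⟩ ⟨γ, Ideal.subset_span (.inr ⟨2, rfl⟩)⟩)
end
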